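/- Let m ≥ 3 and let b̃ : ℝ^m → ℝ be continuous, satisfy 0 ≤ b̃(x) ≤ C(1+|x|²)^{-2} for all x ∈ ℝ^m and some constant C > 0, and suppose b̃ is not identically zero (i.e., b̃(x₀) > 0 for some x₀ ∈ ℝ^m). Then the infimum S_{b̃} of the weighted Sobolev quotient Q_{b̃} over all admissible functions is not attained: every admissible function f satisfies Q_{b̃}(f) > S_{b̃}. -/

import Mathlib

open MeasureTheory

/-- The critical Sobolev exponent integral `∫ |f|^{2*}` with `2* = 2m/(m-2)`. -/
noncomputable def critInt (m : ℕ) (f : EuclideanSpace ℝ (Fin m) → ℝ) : ℝ :=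
  ∫ x : EuclideanSpace ℝ (Fin m), |f x| ^ ((2 * (m : ℝ)) / ((m : ℝ) - 2))

/-- A function `f : ℝ^m → ℝ` is admissible if it is `C¹`, `0 < ∫ |f|^{2*} < ∞`
and `∫ ‖∇f‖² < ∞`. -/
def Admissible (m : ℕ) (f : EuclideanSpace ℝ (Fin m) → ℝ) : Prop :=
  ContDiff ℝ 1 f ∧
  Integrable (fun x : EuclideanSpace ℝ (Fin m) =>
    |f x| ^ ((2 * (m : ℝ)) / ((m : ℝ) - 2))) ∧
  0 < critInt m f ∧
  Integrable (fun x : EuclideanSpace ℝ (Fin m) => ‖fderiv ℝ f x‖ ^ 2)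

/-- The weighted Sobolev quotient `Q_b(f)`; note `2/2* = (m-2)/m`. -/
noncomputable def sobolevQuot (m : ℕ) (b : EuclideanSpace ℝ (Fin m) → ℝ)
    (f : EuclideanSpace ℝ (Fin m) → ℝ) : ℝ :=
  (∫ x : EuclideanSpace ℝ (Fin m), (‖fderiv ℝ f x‖ ^ 2 + b x * f x ^ 2)) /
    (critInt m f) ^ (((m : ℝ) - 2) / (m : ℝ))

/-- The infimum `S_b` of the weighted Sobolev quotient over all admissible functions. -/
noncomputable def sobolevInf (m : ℕ) (b : EuclideanSpace ℝ (Fin m) → ℝ) : ℝ :=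
  sInf {r : ℝ | ∃ f, Admissible m f ∧ sobolevQuot m b f = r}

open Filter Topology

/-- The conformal factor (half of the bubble profile). -/
noncomputable def cfW {m : ℕ} (y : EuclideanSpace ℝ (Fin m)) (t : ℝ)
    (x : EuclideanSpace ℝ (Fin m)) : ℝ := t / (t ^ 2 + ‖x - y‖ ^ 2)

lemma cfW_den_pos {m : ℕ} (y : EuclideanSpace ℝ (Fin m)) {t : ℝ} (ht : 0 < t)
    (x : EuclideanSpace ℝ (Fin m)) : 0 < t ^ 2 + ‖x - y‖ ^ 2 := by positivity

lemma cfW_pos {m : ℕ} (y : EuclideanSpace ℝ (Fin m)) {t : ℝ} (ht : 0 < t)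
    (x : EuclideanSpace ℝ (Fin m)) : 0 < cfW y t x := by
  unfold cfW; positivity

lemma cfW_cont {m : ℕ} (y : EuclideanSpace ℝ (Fin m)) {t : ℝ} (ht : 0 < t) :
    Continuous (cfW y t) := by
  unfold cfW
  refine Continuous.div (by fun_prop) (by fun_prop) (fun x => (cfW_den_pos y ht x).ne')

lemma cfW_base_integrable (m : ℕ) (hm : 3 ≤ m) :
    Integrable (fun x : EuclideanSpace ℝ (Fin m) => ((1 + ‖x‖ ^ 2)⁻¹) ^ m) := by
  have h := integrable_rpow_neg_one_add_norm_sq (E := EuclideanSpace ℝ (Fin m))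
    (μ := volume) (r := 2 * m) (by
      have : (3 : ℝ) ≤ m := by exact_mod_cast hm
      simp; linarith)
  refine h.congr (Eventually.of_forall fun x => ?_)
  have h1 : (0 : ℝ) ≤ 1 + ‖x‖ ^ 2 := by positivity
  simp only
  rw [show (-(2 * (m : ℝ)) / 2) = -(m : ℝ) by ring, Real.rpow_neg h1, Real.rpow_natCast, inv_pow]

lemma cfW_eq {m : ℕ} (y : EuclideanSpace ℝ (Fin m)) {t : ℝ} (ht : 0 < t)
    (x : EuclideanSpace ℝ (Fin m)) :
    cfW y t x ^ m = (t⁻¹) ^ m * ((1 + ‖t⁻¹ • (x - y)‖ ^ 2)⁻¹) ^ m := by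
  rw [← mul_pow, norm_smul, Real.norm_eq_abs, abs_of_pos (by positivity)]
  congr 1
  unfold cfW
  field_simp

lemma cfW_integrable {m : ℕ} (hm : 3 ≤ m) (y : EuclideanSpace ℝ (Fin m)) {t : ℝ} (ht : 0 < t) :
    Integrable (fun x => cfW y t x ^ m) := by
  simp_rw [cfW_eq y ht]
  refine Integrable.const_mul ?_ _
  have h1 := (integrable_comp_smul_iff volume
    (fun x : EuclideanSpace ℝ (Fin m) => ((1 + ‖x‖ ^ 2)⁻¹) ^ m)
    (inv_pos.mpr ht).ne').mpr (cfW_base_integrable m hm)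
  exact h1.comp_sub_right y

lemma cfW_integral {m : ℕ} (hm : 3 ≤ m) (y : EuclideanSpace ℝ (Fin m)) {t : ℝ} (ht : 0 < t) :
    ∫ x, cfW y t x ^ m = ∫ x : EuclideanSpace ℝ (Fin m), ((1 + ‖x‖ ^ 2)⁻¹) ^ m := by
  simp_rw [cfW_eq y ht]
  rw [integral_const_mul, integral_sub_right_eq_self
    (fun x : EuclideanSpace ℝ (Fin m) => ((1 + ‖t⁻¹ • x‖ ^ 2)⁻¹) ^ m) y,
    Measure.integral_comp_inv_smul volume
    (fun x : EuclideanSpace ℝ (Fin m) => ((1 + ‖x‖ ^ 2)⁻¹) ^ m)]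
  simp only [finrank_euclideanSpace, Fintype.card_fin, smul_eq_mul]
  rw [abs_of_pos (by positivity), ← mul_assoc, ← mul_pow, inv_mul_cancel₀ ht.ne', one_pow, one_mul]

lemma young_aux {m : ℕ} (hm : 3 ≤ m) {w u δ : ℝ} (hw : 0 ≤ w) (hδ : 0 < δ) :
    w ^ 2 * u ^ 2 ≤ δ * w ^ m +
      (δ⁻¹) ^ (2 / ((m : ℝ) - 2)) * |u| ^ ((2 * (m : ℝ)) / ((m : ℝ) - 2)) := by
  have hm' : (3 : ℝ) ≤ m := by exact_mod_cast hm
  have hp : (0 : ℝ) < (m : ℝ) - 2 := by linarith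
  have hA : 0 ≤ δ * w ^ m := by positivity
  have hB : 0 ≤ (δ⁻¹) ^ (2 / ((m : ℝ) - 2)) * |u| ^ ((2 * (m : ℝ)) / ((m : ℝ) - 2)) := by
    positivity
  have hsplit : w ^ m = w ^ 2 * w ^ (m - 2) := by
    rw [← pow_add]; congr 1; omega
  rcases le_or_gt (u ^ 2) (δ * w ^ (m - 2)) with h | h
  · have : w ^ 2 * u ^ 2 ≤ δ * w ^ m := by
      rw [hsplit]; nlinarith [sq_nonneg w]
    linarith
  · have hu : 0 < u ^ 2 := lt_of_le_of_lt (by positivity) h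
    have hu0 : 0 < |u| := by
      rw [abs_pos]; rintro rfl; simp at hu
    have h1 : w ^ (m - 2) ≤ δ⁻¹ * u ^ 2 := by
      rw [inv_mul_eq_div, le_div_iff₀ hδ]; linarith
    have h2 : w ^ 2 = (w ^ (m - 2)) ^ (2 / ((m : ℝ) - 2)) := by
      rw [← Real.rpow_natCast w (m - 2), ← Real.rpow_mul hw]
      have : ((m - 2 : ℕ) : ℝ) * (2 / ((m : ℝ) - 2)) = (2 : ℕ) := by
        rw [Nat.cast_sub (by omega)]; push_cast; field_simp
      rw [this, Real.rpow_natCast]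
    have h3 : w ^ 2 ≤ (δ⁻¹) ^ (2 / ((m : ℝ) - 2)) * (u ^ 2) ^ (2 / ((m : ℝ) - 2)) := by
      rw [h2, ← Real.mul_rpow (by positivity) (by positivity)]
      exact Real.rpow_le_rpow (by positivity) h1 (by positivity)
    have h4 : (u ^ 2) ^ (2 / ((m : ℝ) - 2)) * u ^ 2 = |u| ^ ((2 * (m : ℝ)) / ((m : ℝ) - 2)) := by
      rw [← sq_abs u, ← Real.rpow_natCast |u| 2, ← Real.rpow_mul (abs_nonneg u),
        ← Real.rpow_add hu0]
      congr 1; push_cast; field_simp; ring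
    have : w ^ 2 * u ^ 2 ≤ (δ⁻¹) ^ (2 / ((m : ℝ) - 2)) * |u| ^ ((2 * (m : ℝ)) / ((m : ℝ) - 2)) := by
      rw [← h4, ← mul_assoc]
      exact mul_le_mul_of_nonneg_right h3 (sq_nonneg u)
    linarith

lemma cfW_sq_integrable {m : ℕ} (hm : 3 ≤ m) (y : EuclideanSpace ℝ (Fin m)) {t : ℝ} (ht : 0 < t)
    {f : EuclideanSpace ℝ (Fin m) → ℝ} (hf : Continuous f)
    (hi : Integrable (fun x => |f x| ^ ((2 * (m : ℝ)) / ((m : ℝ) - 2)))) :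
    Integrable (fun x => cfW y t x ^ 2 * f x ^ 2) := by
  refine Integrable.mono' (((cfW_integrable hm y ht).const_mul 1).add
    (hi.const_mul ((1⁻¹ : ℝ) ^ (2 / ((m : ℝ) - 2))))) ?_ (Eventually.of_forall fun x => ?_)
  · have := cfW_cont y ht
    exact (by fun_prop : Continuous (fun x => cfW y t x ^ 2 * f x ^ 2)).aestronglyMeasurable
  · rw [Real.norm_eq_abs, abs_of_nonneg (by positivity)]
    exact young_aux hm (cfW_pos y ht x).le one_pos

lemma cfW_sq_tendsto {m : ℕ} (hm : 3 ≤ m) (y : ℕ → EuclideanSpace ℝ (Fin m)) (t : ℕ → ℝ)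
    (ht : ∀ k, 0 < t k) (hlim : ∀ x, Tendsto (fun k => cfW (y k) (t k) x) atTop (𝓝 0))
    {f : EuclideanSpace ℝ (Fin m) → ℝ} (hf : Continuous f)
    (hi : Integrable (fun x => |f x| ^ ((2 * (m : ℝ)) / ((m : ℝ) - 2)))) :
    Tendsto (fun k => ∫ x, cfW (y k) (t k) x ^ 2 * f x ^ 2) atTop (𝓝 0) := by
  set I0 := ∫ x : EuclideanSpace ℝ (Fin m), ((1 + ‖x‖ ^ 2)⁻¹) ^ m with hI0
  have hI0n : 0 ≤ I0 := integral_nonneg fun x => by positivity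
  have hnn : ∀ k, 0 ≤ ∫ x, cfW (y k) (t k) x ^ 2 * f x ^ 2 :=
    fun k => integral_nonneg fun x => by positivity
  have key : ∀ δ : ℝ, 0 < δ → ∀ᶠ k in atTop,
      ∫ x, cfW (y k) (t k) x ^ 2 * f x ^ 2 ≤ δ * I0 + δ := by
    intro δ hδ
    set F : ℕ → EuclideanSpace ℝ (Fin m) → ℝ := fun k x =>
      max (cfW (y k) (t k) x ^ 2 * f x ^ 2 - δ * cfW (y k) (t k) x ^ m) 0 with hF
    have hFc : ∀ k, Continuous (F k) := by
      intro k
      have := cfW_cont (y k) (ht k)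
      simp only [hF]; fun_prop
    set g : EuclideanSpace ℝ (Fin m) → ℝ := fun x =>
      (δ⁻¹) ^ (2 / ((m : ℝ) - 2)) * |f x| ^ ((2 * (m : ℝ)) / ((m : ℝ) - 2)) with hg
    have hgi : Integrable g := hi.const_mul _
    have hFg : ∀ k x, ‖F k x‖ ≤ g x := by
      intro k x
      rw [Real.norm_eq_abs, abs_of_nonneg (le_max_right _ _)]
      refine max_le ?_ (by simp only [hg]; positivity)
      have := young_aux (u := f x) hm (cfW_pos (y k) (ht k) x).le hδ
      simp only [hg]; linarith
    have hdct : Tendsto (fun k => ∫ x, F k x) atTop (𝓝 (∫ x : EuclideanSpace ℝ (Fin m), (0 : ℝ))) := by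
      refine tendsto_integral_of_dominated_convergence g
        (fun k => (hFc k).aestronglyMeasurable) hgi
        (fun k => Eventually.of_forall (hFg k)) (Eventually.of_forall fun x => ?_)
      have h1 := hlim x
      have h2 : Tendsto (fun k => max (cfW (y k) (t k) x ^ 2 * f x ^ 2
          - δ * cfW (y k) (t k) x ^ m) 0) atTop (𝓝 (max (0 ^ 2 * f x ^ 2 - δ * 0 ^ m) 0)) :=
        Tendsto.max (((h1.pow 2).mul_const _).sub ((h1.pow m).const_mul δ)) tendsto_const_nhds
      have h3 : max ((0 : ℝ) ^ 2 * f x ^ 2 - δ * 0 ^ m) 0 = 0 := by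
        rw [zero_pow (by omega : m ≠ 0)]; simp
      rw [h3] at h2
      exact h2
    rw [integral_zero] at hdct
    filter_upwards [hdct.eventually (gt_mem_nhds hδ)] with k hk
    have hFi : Integrable (F k) := hgi.mono' (hFc k).aestronglyMeasurable
      (Eventually.of_forall (hFg k))
    calc ∫ x, cfW (y k) (t k) x ^ 2 * f x ^ 2
        ≤ ∫ x, (δ * cfW (y k) (t k) x ^ m + F k x) := by
          refine integral_mono (cfW_sq_integrable hm _ (ht k) hf hi)
            (((cfW_integrable hm _ (ht k)).const_mul δ).add hFi) (fun x => ?_)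
          have := le_max_left (cfW (y k) (t k) x ^ 2 * f x ^ 2 - δ * cfW (y k) (t k) x ^ m) 0
          simp only [hF]; linarith
      _ = δ * I0 + ∫ x, F k x := by
          rw [integral_add ((cfW_integrable hm _ (ht k)).const_mul δ) hFi, integral_const_mul,
            cfW_integral hm _ (ht k)]
      _ ≤ δ * I0 + δ := by linarith
  rw [Metric.tendsto_atTop]
  intro ε hε
  have h := key (ε / (2 * (I0 + 1))) (by positivity)
  obtain ⟨N, hN⟩ := eventually_atTop.mp h
  refine ⟨N, fun k hk => ?_⟩
  rw [Real.dist_eq, sub_zero, abs_of_nonneg (hnn k)]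
  refine lt_of_le_of_lt (hN k hk) ?_
  have : ε / (2 * (I0 + 1)) * I0 + ε / (2 * (I0 + 1)) = ε / 2 := by field_simp
  linarith


lemma bf_sq_integrable {m : ℕ} (hm : 3 ≤ m) {b : EuclideanSpace ℝ (Fin m) → ℝ}
    (hb_cont : Continuous b) {C : ℝ}
    (hb_nonneg : ∀ x, 0 ≤ b x)
    (hb_bound : ∀ x, b x ≤ C / (1 + ‖x‖ ^ 2) ^ 2)
    {f : EuclideanSpace ℝ (Fin m) → ℝ} (hf : Continuous f)
    (hi : Integrable (fun x => |f x| ^ ((2 * (m : ℝ)) / ((m : ℝ) - 2)))) :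
    Integrable (fun x => b x * f x ^ 2) := by
  refine Integrable.mono' ((cfW_sq_integrable hm 0 one_pos hf hi).const_mul C)
    (by fun_prop : Continuous (fun x => b x * f x ^ 2)).aestronglyMeasurable
    (Eventually.of_forall fun x => ?_)
  rw [Real.norm_eq_abs, abs_of_nonneg (mul_nonneg (hb_nonneg x) (sq_nonneg _)), ← mul_assoc]
  refine mul_le_mul_of_nonneg_right ((hb_bound x).trans_eq ?_) (sq_nonneg _)
  simp [cfW, div_eq_mul_inv]

lemma bf_sq_zero {m : ℕ} (hm : 3 ≤ m) {b : EuclideanSpace ℝ (Fin m) → ℝ}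
    (hb_cont : Continuous b) {C : ℝ} (hC : 0 < C)
    (hb_nonneg : ∀ x, 0 ≤ b x)
    (hb_bound : ∀ x, b x ≤ C / (1 + ‖x‖ ^ 2) ^ 2)
    {f : EuclideanSpace ℝ (Fin m) → ℝ} (hf : Admissible m f)
    (hmin : ∀ g, Admissible m g → sobolevQuot m b f ≤ sobolevQuot m b g) :
    ∀ x, b x * f x ^ 2 = 0 := by
  obtain ⟨hf1, hfi, hfp, hfd⟩ := hf
  have hfc : Continuous f := hf1.continuous
  have : Nontrivial (EuclideanSpace ℝ (Fin m)) := by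
    have : Nonempty (Fin m) := ⟨⟨0, by omega⟩⟩
    infer_instance
  obtain ⟨e, he⟩ := exists_norm_eq (EuclideanSpace ℝ (Fin m)) (zero_le_one (α := ℝ))
  set v : ℕ → EuclideanSpace ℝ (Fin m) := fun k => (k : ℝ) • e with hv
  have hvn : ∀ k, ‖v k‖ = k := by
    intro k; simp [hv, norm_smul, he]
  have hbfi := bf_sq_integrable hm hb_cont hb_nonneg hb_bound hfc hfi
  have step : ∀ k, ∫ x, b x * f x ^ 2 ≤ C * ∫ x, cfW (-v k) 1 x ^ 2 * f x ^ 2 := by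
    intro k
    set g : EuclideanSpace ℝ (Fin m) → ℝ := fun x => f (x - v k) with hg
    have hgd : ∀ x, fderiv ℝ g x = fderiv ℝ f (x - v k) := by
      intro x; simp only [hg]; rw [fderiv_comp_sub]
    have hcrit : critInt m g = critInt m f := by
      unfold critInt
      exact integral_sub_right_eq_self
        (fun x => |f x| ^ ((2 * (m : ℝ)) / ((m : ℝ) - 2))) (v k)
    have hgi : Integrable (fun x => |g x| ^ ((2 * (m : ℝ)) / ((m : ℝ) - 2))) :=
      hfi.comp_sub_right (v k)
    have hgdi : Integrable (fun x => ‖fderiv ℝ g x‖ ^ 2) := by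
      simp_rw [hgd]; exact hfd.comp_sub_right (v k)
    have hgA : Admissible m g := by
      refine ⟨hf1.comp (contDiff_id.sub contDiff_const), hgi, by rw [hcrit]; exact hfp, hgdi⟩
    have h := hmin g hgA
    unfold sobolevQuot at h
    rw [hcrit, div_le_div_iff_of_pos_right (by positivity)] at h
    have hgc : Continuous g := hgA.1.continuous
    rw [integral_add hfd hbfi, integral_add hgdi
      (bf_sq_integrable hm hb_cont hb_nonneg hb_bound hgc hgi)] at h
    simp_rw [hgd] at h
    rw [integral_sub_right_eq_self (fun x => ‖fderiv ℝ f x‖ ^ 2) (v k)] at h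
    have h1 : ∫ x, b x * f x ^ 2 ≤ ∫ x, b x * g x ^ 2 := by linarith
    refine h1.trans ?_
    have h2 : ∫ x, b x * g x ^ 2 = ∫ x, b (x + v k) * f x ^ 2 := by
      rw [← integral_add_right_eq_self (fun x => b x * g x ^ 2) (v k)]
      simp [hg]
    rw [h2, ← integral_const_mul]
    refine integral_mono_of_nonneg (Eventually.of_forall fun x => ?_)
      ((cfW_sq_integrable hm _ one_pos hfc hfi).const_mul C) (Eventually.of_forall fun x => ?_)
    · exact mul_nonneg (hb_nonneg _) (sq_nonneg _)
    · simp only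
      rw [← mul_assoc]
      refine mul_le_mul_of_nonneg_right ((hb_bound _).trans_eq ?_) (sq_nonneg _)
      simp [cfW, div_eq_mul_inv]
  have hlim := cfW_sq_tendsto hm (fun k => -v k) (fun _ => 1) (fun _ => one_pos) (fun x => by
    have h1 : Tendsto (fun k : ℕ => ((k : ℝ) - ‖x‖)) atTop atTop :=
      tendsto_atTop_add_const_right _ _ tendsto_natCast_atTop_atTop
    have h2 : Tendsto (fun k : ℕ => ((k : ℝ) - ‖x‖)⁻¹) atTop (𝓝 0) := h1.inv_tendsto_atTop
    refine squeeze_zero' (Eventually.of_forall fun k => (cfW_pos _ one_pos _).le) ?_ h2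
    filter_upwards [h1.eventually_ge_atTop 1] with k hk
    have h3 : (k : ℝ) - ‖x‖ ≤ ‖x - -v k‖ := by
      have := norm_sub_norm_le (v k) (-x)
      rw [hvn, norm_neg] at this
      refine this.trans_eq ?_
      congr 1; abel
    unfold cfW
    rw [one_div]
    refine inv_anti₀ (by linarith) ?_
    nlinarith) hfc hfi
  have hle : ∫ x, b x * f x ^ 2 ≤ 0 := by
    have := hlim.const_mul C
    rw [mul_zero] at this
    exact ge_of_tendsto this (Eventually.of_forall step)
  have hz : ∫ x, b x * f x ^ 2 = 0 :=
    le_antisymm hle (integral_nonneg fun x => mul_nonneg (hb_nonneg _) (sq_nonneg _))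
  rw [integral_eq_zero_iff_of_nonneg (fun x => mul_nonneg (hb_nonneg _) (sq_nonneg _)) hbfi] at hz
  have := (Continuous.ae_eq_iff_eq volume (hb_cont.mul (hfc.pow 2)) continuous_const).mp hz
  intro x
  exact congrFun this x


lemma taylor_aux {q : ℝ} (_hq : 2 < q) {ε : ℝ} (hε : 0 < ε) :
    ∃ δ : ℝ, 0 < δ ∧ δ ≤ 1 / 2 ∧ ∀ u : ℝ, |u| ≤ δ →
      1 + q * u + (q * (q - 1) / 2 - ε) * u ^ 2 ≤ (1 + u) ^ q := by
  set g : ℝ → ℝ := fun u => (1 + u) ^ q - (1 + q * u + (q * (q - 1) / 2 - ε) * u ^ 2) with hg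
  have hd : ∀ u : ℝ, -1 < u → HasDerivAt g
      (q * (1 + u) ^ (q - 1) - (q + (q * (q - 1) / 2 - ε) * (2 * u))) u := by
    intro u hu
    have h1 : HasDerivAt (fun u : ℝ => 1 + u) 1 u := (hasDerivAt_id u).const_add 1
    have h2 := h1.rpow_const (p := q) (Or.inl (by linarith))
    have h3 : HasDerivAt (fun u : ℝ => 1 + q * u + (q * (q - 1) / 2 - ε) * u ^ 2)
        (q * 1 + (q * (q - 1) / 2 - ε) * (2 * u)) u := by
      have h4 := (((hasDerivAt_id u).const_mul q).const_add 1).add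
        ((hasDerivAt_pow 2 u).const_mul (q * (q - 1) / 2 - ε))
      refine h4.congr_deriv ?_
      simp
    refine (h2.sub h3).congr_deriv ?_
    ring
  have hde : deriv g =ᶠ[𝓝 0] fun u =>
      (q * (1 + u) ^ (q - 1) - (q + (q * (q - 1) / 2 - ε) * (2 * u))) := by
    filter_upwards [lt_mem_nhds (by norm_num : (-1 : ℝ) < 0)] with u hu
    exact (hd u hu).deriv
  have hdd : HasDerivAt (fun u : ℝ =>
      (q * (1 + u) ^ (q - 1) - (q + (q * (q - 1) / 2 - ε) * (2 * u)))) (2 * ε) 0 := by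
    have h1 : HasDerivAt (fun u : ℝ => 1 + u) 1 0 := (hasDerivAt_id (0 : ℝ)).const_add 1
    have h2 := (h1.rpow_const (p := q - 1) (Or.inl (by norm_num))).const_mul q
    have h3 := (((hasDerivAt_id (0 : ℝ)).const_mul 2).const_mul (q * (q - 1) / 2 - ε)).const_add q
    refine (h2.sub h3).congr_deriv ?_
    simp; ring
  have hmin : IsLocalMin g 0 := by
    refine isLocalMin_of_deriv_deriv_pos ?_ ?_ (hd 0 (by norm_num)).continuousAt
    · rw [hde.deriv_eq, hdd.deriv]; linarith
    · rw [(hd 0 (by norm_num)).deriv]; simp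
  have hg0 : g 0 = 0 := by simp [hg]
  obtain ⟨δ, hδ, hball⟩ := Metric.eventually_nhds_iff.mp hmin
  refine ⟨min (δ / 2) (1 / 2), by positivity, min_le_right _ _, fun u hu => ?_⟩
  have : dist u 0 < δ := by
    rw [Real.dist_eq, sub_zero]
    have := min_le_left (δ / 2) (1 / 2)
    linarith
  have h := hball this
  rw [hg0] at h
  simp only [hg] at h
  linarith

lemma concave_aux {α : ℝ} {ε : ℝ} (hε : 0 < ε) :
    ∃ δ : ℝ, 0 < δ ∧ ∀ z : ℝ, 0 ≤ z → z ≤ δ → 1 + (α - ε) * z ≤ (1 + z) ^ α := by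
  have h1 : HasDerivAt (fun u : ℝ => 1 + u) 1 0 := (hasDerivAt_id (0 : ℝ)).const_add 1
  have h2 := (h1.rpow_const (p := α) (Or.inl (by norm_num)))
  have h3 := (hasDerivAt_iff_isLittleO.mp h2).def hε
  obtain ⟨δ, hδ, hball⟩ := Metric.eventually_nhds_iff.mp h3
  refine ⟨δ / 2, by positivity, fun z hz hzδ => ?_⟩
  have h := hball (y := z) (by rw [Real.dist_eq, sub_zero, abs_of_nonneg hz]; linarith)
  simp only [Real.norm_eq_abs, sub_zero, add_zero, Real.one_rpow, smul_eq_mul, mul_one, one_mul,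
    abs_of_nonneg hz] at h
  have := (abs_le.mp h).1
  linarith

lemma dual_parallelogram {m : ℕ} (a c : EuclideanSpace ℝ (Fin m) →L[ℝ] ℝ) :
    ‖a + c‖ ^ 2 + ‖a - c‖ ^ 2 = 2 * ‖a‖ ^ 2 + 2 * ‖c‖ ^ 2 := by
  set φ := (InnerProductSpace.toDual ℝ (EuclideanSpace ℝ (Fin m))).symm
  have h : ∀ a : EuclideanSpace ℝ (Fin m) →L[ℝ] ℝ, ‖a‖ = ‖φ a‖ := fun a => (φ.norm_map a).symm
  rw [h (a + c), h (a - c), h a, h c, map_add, map_sub]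
  have := parallelogram_law_with_norm ℝ (φ a) (φ c)
  nlinarith

lemma second_var {m : ℕ} (hm : 3 ≤ m) {b : EuclideanSpace ℝ (Fin m) → ℝ}
    {f : EuclideanSpace ℝ (Fin m) → ℝ} (hf : Admissible m f)
    (hmin : ∀ g, Admissible m g → sobolevQuot m b f ≤ sobolevQuot m b g)
    (hbf : ∀ x, b x * f x ^ 2 = 0)
    {ψ : EuclideanSpace ℝ (Fin m) → ℝ} (hψ : ContDiff ℝ 1 ψ) (hψ1 : ∀ x, |ψ x| ≤ 1)
    (hψi : Integrable (fun x => f x ^ 2 * ‖fderiv ℝ ψ x‖ ^ 2))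
    (h0 : ∫ x, ψ x * |f x| ^ ((2 * (m : ℝ)) / ((m : ℝ) - 2)) = 0) :
    ((2 * (m : ℝ)) / ((m : ℝ) - 2) - 1) * (∫ x, ‖fderiv ℝ f x‖ ^ 2) *
      (∫ x, ψ x ^ 2 * |f x| ^ ((2 * (m : ℝ)) / ((m : ℝ) - 2)))
      ≤ critInt m f * ∫ x, ‖fderiv ℝ (fun x => ψ x * f x) x‖ ^ 2 := by
  obtain ⟨hf1, hfi, hfp, hfd⟩ := hf
  have hm' : (3 : ℝ) ≤ m := by exact_mod_cast hm
  have hp : (0 : ℝ) < (m : ℝ) - 2 := by linarith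
  set q : ℝ := (2 * (m : ℝ)) / ((m : ℝ) - 2) with hq
  have hq2 : 2 < q := by rw [hq, lt_div_iff₀ hp]; linarith
  set α : ℝ := ((m : ℝ) - 2) / (m : ℝ) with hα
  have hα0 : 0 < α := by positivity
  have hαq : α * q = 2 := by rw [hα, hq]; field_simp
  have hfc := hf1.continuous
  have hψc := hψ.continuous
  set A := ∫ x, ‖fderiv ℝ f x‖ ^ 2 with hA
  set P := ∫ x, ψ x ^ 2 * |f x| ^ q with hP
  set D := ∫ x, ‖fderiv ℝ (fun x => ψ x * f x) x‖ ^ 2 with hD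
  set M := critInt m f with hM
  have hA0 : 0 ≤ A := integral_nonneg fun x => by positivity
  have hP0 : 0 ≤ P := integral_nonneg fun x => by positivity
  have hψf : ContDiff ℝ 1 (fun x => ψ x * f x) := hψ.mul hf1
  have hqc : Continuous (fun x => |f x| ^ q) :=
    hfc.abs.rpow_const (fun x => Or.inr (by linarith))
  have hDc : Continuous (fun x => ‖fderiv ℝ (fun x => ψ x * f x) x‖ ^ 2) :=
    ((hψf.continuous_fderiv one_ne_zero).norm).pow 2
  have hi1 : Integrable (fun x => ψ x * |f x| ^ q) := by
    refine hfi.mono' (hψc.mul hqc).aestronglyMeasurable (Eventually.of_forall fun x => ?_)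
    rw [Real.norm_eq_abs, abs_mul, abs_of_nonneg (by positivity : 0 ≤ |f x| ^ q)]
    exact mul_le_of_le_one_left (by positivity) (hψ1 x)
  have hi2 : Integrable (fun x => ψ x ^ 2 * |f x| ^ q) := by
    refine hfi.mono' ((hψc.pow 2).mul hqc).aestronglyMeasurable (Eventually.of_forall fun x => ?_)
    rw [Real.norm_eq_abs, abs_of_nonneg (by positivity)]
    refine mul_le_of_le_one_left (by positivity) ?_
    rw [← sq_abs]; exact pow_le_one₀ (abs_nonneg _) (hψ1 x)
  have hDi : Integrable (fun x => ‖fderiv ℝ (fun x => ψ x * f x) x‖ ^ 2) := by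
    refine ((hfd.const_mul 2).add (hψi.const_mul 2)).mono' hDc.aestronglyMeasurable
      (Eventually.of_forall fun x => ?_)
    rw [Real.norm_eq_abs, abs_of_nonneg (by positivity)]
    rw [fderiv_fun_mul (hψ.differentiable one_ne_zero x) (hf1.differentiable one_ne_zero x)]
    have h1 := norm_add_le (ψ x • fderiv ℝ f x) (f x • fderiv ℝ ψ x)
    rw [norm_smul, norm_smul, Real.norm_eq_abs, Real.norm_eq_abs] at h1
    have h2 : |ψ x| * ‖fderiv ℝ f x‖ ≤ ‖fderiv ℝ f x‖ :=
      mul_le_of_le_one_left (norm_nonneg _) (hψ1 x)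
    have h3 : ‖ψ x • fderiv ℝ f x + f x • fderiv ℝ ψ x‖ ≤
        ‖fderiv ℝ f x‖ + |f x| * ‖fderiv ℝ ψ x‖ := by linarith
    have h4 : ‖ψ x • fderiv ℝ f x + f x • fderiv ℝ ψ x‖ ^ 2 ≤
        (‖fderiv ℝ f x‖ + |f x| * ‖fderiv ℝ ψ x‖) ^ 2 := pow_le_pow_left₀ (norm_nonneg _) h3 2
    simp only [Pi.add_apply]
    rw [← sq_abs (f x)]
    nlinarith [sq_nonneg (‖fderiv ℝ f x‖ - |f x| * ‖fderiv ℝ ψ x‖)]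
  have hder : ∀ s x, fderiv ℝ (fun x => f x * (1 + s * ψ x)) x =
      fderiv ℝ f x + s • fderiv ℝ (fun x => ψ x * f x) x := by
    intro s x
    have e1 : (fun x => f x * (1 + s * ψ x)) = fun x => f x + s * (ψ x * f x) := by
      funext x; ring
    rw [e1, fderiv_fun_add (hf1.differentiable one_ne_zero x)
      ((hψf.differentiable one_ne_zero x).const_mul s),
      fderiv_const_mul (hψf.differentiable one_ne_zero x)]
  have hFi : ∀ s : ℝ, Integrable (fun x => ‖fderiv ℝ (fun x => f x * (1 + s * ψ x)) x‖ ^ 2) := by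
    intro s
    have hc : ContDiff ℝ 1 (fun x => f x * (1 + s * ψ x)) :=
      hf1.mul (contDiff_const.add (contDiff_const.mul hψ))
    refine ((hfd.const_mul 2).add (hDi.const_mul (2 * s ^ 2))).mono'
      (((hc.continuous_fderiv one_ne_zero).norm).pow 2).aestronglyMeasurable
      (Eventually.of_forall fun x => ?_)
    rw [Real.norm_eq_abs, abs_of_nonneg (by positivity), hder]
    have h := dual_parallelogram (fderiv ℝ f x) (s • fderiv ℝ (fun x => ψ x * f x) x)
    rw [norm_smul s, mul_pow, Real.norm_eq_abs, sq_abs] at h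
    simp only [Pi.add_apply]
    nlinarith [sq_nonneg ‖fderiv ℝ f x - s • fderiv ℝ (fun x => ψ x * f x) x‖]
  have hFsum : ∀ s : ℝ, (∫ x, ‖fderiv ℝ (fun x => f x * (1 + s * ψ x)) x‖ ^ 2) +
      (∫ x, ‖fderiv ℝ (fun x => f x * (1 + (-s) * ψ x)) x‖ ^ 2) = 2 * A + 2 * s ^ 2 * D := by
    intro s
    rw [← integral_add (hFi s) (hFi (-s)), hA, hD, ← integral_const_mul, ← integral_const_mul,
      ← integral_add (hfd.const_mul 2) (hDi.const_mul _)]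
    refine integral_congr_ae (Eventually.of_forall fun x => ?_)
    simp only [hder]
    have h := dual_parallelogram (fderiv ℝ f x) (s • fderiv ℝ (fun x => ψ x * f x) x)
    rw [norm_smul s, mul_pow, Real.norm_eq_abs, sq_abs] at h
    rw [neg_smul, ← sub_eq_add_neg, h]; ring
  have hexp : ∀ s : ℝ, |s| ≤ 1 / 2 → ∀ x, 0 < 1 + s * ψ x := by
    intro s hs x
    have : |s * ψ x| ≤ 1 / 2 := by
      rw [abs_mul]; nlinarith [hψ1 x, abs_nonneg (ψ x), abs_nonneg s]
    have := (abs_le.mp this).1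
    linarith
  have hNeq : ∀ s : ℝ, |s| ≤ 1 / 2 → ∀ x, |f x * (1 + s * ψ x)| ^ q =
      |f x| ^ q * (1 + s * ψ x) ^ q := by
    intro s hs x
    rw [abs_mul, abs_of_pos (hexp s hs x), Real.mul_rpow (abs_nonneg _) (hexp s hs x).le]
  have hNi : ∀ s : ℝ, |s| ≤ 1 / 2 → Integrable (fun x => |f x * (1 + s * ψ x)| ^ q) := by
    intro s hs
    have hc : Continuous (fun x => |f x * (1 + s * ψ x)| ^ q) :=
      (by fun_prop : Continuous (fun x => |f x * (1 + s * ψ x)|)).rpow_const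
        (fun x => Or.inr (by linarith))
    refine (hfi.const_mul ((2 : ℝ) ^ q)).mono' hc.aestronglyMeasurable
      (Eventually.of_forall fun x => ?_)
    rw [Real.norm_eq_abs, abs_of_nonneg (by positivity), hNeq s hs, mul_comm]
    refine mul_le_mul_of_nonneg_right ?_ (by positivity)
    refine Real.rpow_le_rpow (hexp s hs x).le ?_ (by linarith)
    have : |s * ψ x| ≤ 1 / 2 := by
      rw [abs_mul]; nlinarith [hψ1 x, abs_nonneg (ψ x), abs_nonneg s]
    have := (abs_le.mp this).2
    linarith
  have hMe : M = ∫ x, |f x| ^ q := rfl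
  -- the main estimate
  have main : ∀ ε : ℝ, 0 < ε → ε < 1 → ε < α →
      A * ((α - ε) * (q * (q - 1) / 2 - ε) * P) ≤ M * D := by
    intro ε hε hε1 hεα
    obtain ⟨δ, hδ, hδ2, hT⟩ := taylor_aux hq2 hε
    obtain ⟨η, hη, hCv⟩ := concave_aux (α := α) hε
    set c := q * (q - 1) / 2 - ε with hc
    have hc0 : 0 < c := by rw [hc]; nlinarith
    have hlow : ∀ s : ℝ, |s| ≤ δ → M + c * s ^ 2 * P ≤
        critInt m (fun x => f x * (1 + s * ψ x)) := by
      intro s hs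
      have e : M + c * s ^ 2 * P = ∫ x, (|f x| ^ q + (q * s) * (ψ x * |f x| ^ q)
          + (c * s ^ 2) * (ψ x ^ 2 * |f x| ^ q)) := by
        have hi3 : Integrable (fun x => |f x| ^ q + (q * s) * (ψ x * |f x| ^ q)) :=
          hfi.add (hi1.const_mul _)
        rw [integral_add hi3 (hi2.const_mul _),
          integral_add hfi (hi1.const_mul _), integral_const_mul, integral_const_mul, h0, ← hMe]
        ring
      rw [e]
      refine integral_mono ((hfi.add (hi1.const_mul _)).add (hi2.const_mul _))
        (hNi s (hs.trans hδ2)) (fun x => ?_)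
      simp only
      rw [← hq, hNeq s (hs.trans hδ2)]
      have hu : |s * ψ x| ≤ δ := by
        rw [abs_mul]; nlinarith [hψ1 x, abs_nonneg (ψ x), abs_nonneg s]
      have h := mul_le_mul_of_nonneg_left (hT _ hu) (by positivity : 0 ≤ |f x| ^ q)
      refine le_trans (le_of_eq ?_) h
      ring
    have hquot : ∀ s : ℝ, |s| ≤ δ → c * s ^ 2 * P / M ≤ η →
        A * (1 + (α - ε) * (c * s ^ 2 * P / M)) ≤
          ∫ x, ‖fderiv ℝ (fun x => f x * (1 + s * ψ x)) x‖ ^ 2 := by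
      intro s hs hsη
      have hNlow := hlow s hs
      set N := critInt m (fun x => f x * (1 + s * ψ x)) with hN
      have hcs : 0 ≤ c * s ^ 2 * P := by positivity
      have hNp : 0 < N := by linarith
      have hg : Admissible m (fun x => f x * (1 + s * ψ x)) :=
        ⟨hf1.mul (contDiff_const.add (contDiff_const.mul hψ)), hNi s (hs.trans hδ2), hNp, hFi s⟩
      have h := hmin _ hg
      unfold sobolevQuot at h
      have z1 : ∀ x, b x * (f x * (1 + s * ψ x)) ^ 2 = 0 := by
        intro x; rw [mul_pow, ← mul_assoc, hbf, zero_mul]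
      simp only [hbf, z1, add_zero] at h
      rw [← hA, ← hN, ← hM, ← hα, le_div_iff₀ (by positivity)] at h
      refine le_trans ?_ h
      rw [div_mul_eq_mul_div, mul_div_assoc A]
      refine mul_le_mul_of_nonneg_left ?_ hA0
      rw [← Real.div_rpow hNp.le hfp.le]
      refine (hCv _ (by positivity) hsη).trans ?_
      refine Real.rpow_le_rpow (by positivity) ?_ hα0.le
      rw [le_div_iff₀ hfp, add_mul, div_mul_cancel₀ _ hfp.ne']
      linarith
    -- choose s
    obtain ⟨s, hs0, hsδ, hsη⟩ : ∃ s : ℝ, 0 < s ∧ s ≤ δ ∧ c * s ^ 2 * P / M ≤ η := by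
      have ht : Tendsto (fun s : ℝ => c * s ^ 2 * P / M) (𝓝[>] 0) (𝓝 (c * 0 ^ 2 * P / M)) := by
        refine Tendsto.mono_left ?_ nhdsWithin_le_nhds
        exact (by fun_prop : Continuous (fun s : ℝ => c * s ^ 2 * P / M)).tendsto 0
      have e1 := ht.eventually_le_const (u := η) (by simpa using hη)
      have e2 : ∀ᶠ s : ℝ in 𝓝[>] 0, s ∈ Set.Ioc 0 δ := Ioc_mem_nhdsGT hδ
      obtain ⟨s, h1, h2⟩ := (e1.and e2).exists
      exact ⟨s, h2.1, h2.2, h1⟩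
    have hp1 := hquot s (by rwa [abs_of_pos hs0]) hsη
    have hp2 := hquot (-s) (by rwa [abs_neg, abs_of_pos hs0]) (by rwa [neg_sq])
    have hs := hFsum s
    rw [neg_sq] at hp2
    have h5 : A * ((α - ε) * (c * s ^ 2 * P / M)) ≤ s ^ 2 * D := by linarith
    have h6 : A * ((α - ε) * (c * s ^ 2 * P / M)) = s ^ 2 * (A * ((α - ε) * c * P) / M) := by
      field_simp
    rw [h6] at h5
    have h7 := le_of_mul_le_mul_left h5 (by positivity)
    rw [div_le_iff₀ hfp] at h7
    linarith
  have hlim : Tendsto (fun ε : ℝ => A * ((α - ε) * (q * (q - 1) / 2 - ε) * P)) (𝓝[>] 0)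
      (𝓝 (A * ((α - 0) * (q * (q - 1) / 2 - 0) * P))) := by
    refine Tendsto.mono_left ?_ nhdsWithin_le_nhds
    exact (by fun_prop : Continuous
      (fun ε : ℝ => A * ((α - ε) * (q * (q - 1) / 2 - ε) * P))).tendsto 0
  have hfin := le_of_tendsto hlim (b := M * D) (by
    filter_upwards [Ioo_mem_nhdsGT (lt_min one_pos hα0)] with ε hε
    exact main ε hε.1 (hε.2.trans_le (min_le_left _ _)) (hε.2.trans_le (min_le_right _ _)))
  refine le_trans (le_of_eq ?_) hfin
  have : (α - 0) * (q * (q - 1) / 2 - 0) = q - 1 := by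
    rw [sub_zero, sub_zero]
    linear_combination ((q - 1) / 2) * hαq
  rw [this]; ring


lemma bary_badset {m : ℕ} (hm : 3 ≤ m) {h : EuclideanSpace ℝ (Fin m) → ℝ} (h0 : ∀ x, 0 ≤ h x)
    (hi : Integrable h) {ε : ℝ} (hε : 0 < ε) :
    ∃ δ : ℝ, 0 < δ ∧ δ ≤ 1 ∧ ∀ (y : EuclideanSpace ℝ (Fin m)) (t : ℝ), 0 < t →
      ∫ x in {x | t ^ 2 + ‖x - y‖ ^ 2 < δ * ((1 + ‖x‖ ^ 2) * (1 + ‖y‖ ^ 2 + t ^ 2))}, h x ≤ ε := by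
  -- tail
  obtain ⟨K, hK⟩ : ∃ K : ℕ, ∫ x in {x : EuclideanSpace ℝ (Fin m) | (K : ℝ) < ‖x‖}, h x ≤ ε / 2 := by
    have hmeas : ∀ k : ℕ, MeasurableSet {x : EuclideanSpace ℝ (Fin m) | (k : ℝ) < ‖x‖} :=
      fun k => measurableSet_lt measurable_const measurable_norm
    have ht := tendsto_setIntegral_of_antitone (μ := volume) (f := h) hmeas
      (fun a c hac x hx => by
        rw [Set.mem_ofPred_eq] at hx ⊢
        exact lt_of_le_of_lt (Nat.cast_le.mpr hac) hx) ⟨0, hi.integrableOn⟩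
    have he : (⋂ k : ℕ, {x : EuclideanSpace ℝ (Fin m) | (k : ℝ) < ‖x‖}) = ∅ := by
      refine Set.eq_empty_of_forall_notMem fun x hx => ?_
      obtain ⟨n, hn⟩ := exists_nat_gt ‖x‖
      have := Set.mem_iInter.mp hx n
      exact absurd hn (not_lt.mpr (le_of_lt this))
    rw [he, setIntegral_empty] at ht
    exact (ht.eventually_le_const (half_pos hε)).exists
  -- small balls
  obtain ⟨r, hr, hball⟩ : ∃ r : ℝ, 0 < r ∧ ∀ y : EuclideanSpace ℝ (Fin m),
      ∫ x in Metric.ball y r, h x ≤ ε / 2 := by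
    have h1 : Tendsto (fun s : Set (EuclideanSpace ℝ (Fin m)) => ∫ x in s, h x)
        (comap volume (𝓝 0)) (𝓝 0) :=
      hi.tendsto_setIntegral_nhds_zero (s := id) tendsto_comap
    have h2 := h1.eventually_le_const (half_pos hε)
    rw [eventually_comap] at h2
    have h3 : Tendsto (fun r : ℝ => volume (Metric.ball (0 : EuclideanSpace ℝ (Fin m)) r))
        (𝓝[>] 0) (𝓝 0) := by
      have h4 : Tendsto (fun r : ℝ => ENNReal.ofReal (r ^ m) *
          volume (Metric.ball (0 : EuclideanSpace ℝ (Fin m)) 1)) (𝓝 0)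
          (𝓝 (ENNReal.ofReal (0 ^ m) *
          volume (Metric.ball (0 : EuclideanSpace ℝ (Fin m)) 1))) := by
        refine ENNReal.Tendsto.mul_const ?_ (Or.inr measure_ball_lt_top.ne)
        exact (ENNReal.continuous_ofReal.comp (continuous_pow m)).tendsto 0
      rw [zero_pow (by omega : m ≠ 0), ENNReal.ofReal_zero, zero_mul] at h4
      refine (h4.mono_left nhdsWithin_le_nhds).congr' ?_
      filter_upwards [self_mem_nhdsWithin] with r hr
      rw [Measure.addHaar_ball_of_pos volume _ hr]
      simp
    obtain ⟨r, hr1, hr2⟩ := ((h3.eventually h2).and self_mem_nhdsWithin).exists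
    refine ⟨r, hr2, fun y => hr1 _ ?_⟩
    rw [Measure.addHaar_ball_center]
  set s : ℝ := 1 + (K : ℝ) ^ 2 with hs
  have hs1 : 1 ≤ s := by rw [hs]; nlinarith [sq_nonneg (K : ℝ)]
  set δ : ℝ := min 1 (r ^ 2) / (4 * s ^ 2) with hδ
  have hmin0 : 0 < min 1 (r ^ 2) := lt_min one_pos (by positivity)
  have hδ0 : 0 < δ := by positivity
  have hδs : δ * (4 * s ^ 2) = min 1 (r ^ 2) := by rw [hδ]; field_simp
  have hδ1 : δ * (4 * s ^ 2) ≤ 1 := hδs ▸ min_le_left _ _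
  have hδ2 : δ * (4 * s ^ 2) ≤ r ^ 2 := hδs ▸ min_le_right _ _
  refine ⟨δ, hδ0, by nlinarith, fun y t ht => ?_⟩
  have hsub : {x : EuclideanSpace ℝ (Fin m) | t ^ 2 + ‖x - y‖ ^ 2 <
      δ * ((1 + ‖x‖ ^ 2) * (1 + ‖y‖ ^ 2 + t ^ 2))} ⊆
      {x | (K : ℝ) < ‖x‖} ∪ Metric.ball y r := by
    intro x hx
    by_cases hxK : (K : ℝ) < ‖x‖
    · exact Or.inl hxK
    right
    push Not at hxK
    simp only [Set.mem_ofPred_eq] at hx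
    have hxs : 1 + ‖x‖ ^ 2 ≤ s := by
      have := pow_le_pow_left₀ (norm_nonneg x) hxK 2
      rw [hs]; linarith
    have hy : ‖y‖ ≤ ‖x - y‖ + ‖x‖ := by
      have := norm_sub_le x (x - y)
      simp only [sub_sub_cancel] at this
      linarith
    have hy2 : ‖y‖ ^ 2 ≤ 2 * ‖x - y‖ ^ 2 + 2 * ‖x‖ ^ 2 := by
      have := pow_le_pow_left₀ (norm_nonneg y) hy 2
      nlinarith [sq_nonneg (‖x - y‖ - ‖x‖)]
    set R := ‖y‖ ^ 2 + t ^ 2 with hR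
    have hR0 : 0 ≤ R := by positivity
    have hx' : t ^ 2 + ‖x - y‖ ^ 2 < δ * s * (1 + R) := by
      refine hx.trans_le ?_
      rw [mul_assoc]
      refine mul_le_mul_of_nonneg_left ?_ hδ0.le
      rw [show 1 + ‖y‖ ^ 2 + t ^ 2 = 1 + R by rw [hR]; ring]
      exact mul_le_mul_of_nonneg_right hxs (by positivity)
    have hds : δ * s ≤ 1 / 4 := by nlinarith [mul_pos hδ0 (by linarith : 0 < s)]
    have hRb : R ≤ 2 * (t ^ 2 + ‖x - y‖ ^ 2) + 2 * (s - 1) := by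
      nlinarith [sq_nonneg t]
    have hR2 : R < 4 * s - 3 := by
      nlinarith [mul_le_mul_of_nonneg_right hds (by linarith : 0 ≤ 1 + R)]
    have hfin : ‖x - y‖ ^ 2 < r ^ 2 := by
      have : δ * s * (1 + R) ≤ δ * s * (4 * s) :=
        mul_le_mul_of_nonneg_left (by linarith) (by positivity)
      nlinarith [sq_nonneg t]
    rw [Metric.mem_ball, dist_eq_norm]
    exact lt_of_pow_lt_pow_left₀ 2 hr.le hfin
  calc _ ≤ ∫ x in {x | (K : ℝ) < ‖x‖} ∪ Metric.ball y r, h x :=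
        setIntegral_mono_set hi.integrableOn (Eventually.of_forall h0)
          (LE.le.eventuallyLE hsub)
    _ ≤ (∫ x in {x : EuclideanSpace ℝ (Fin m) | (K : ℝ) < ‖x‖}, h x)
        + ∫ x in Metric.ball y r, h x := by
        rw [← integral_add_measure hi.integrableOn hi.integrableOn]
        exact integral_mono_measure (Measure.restrict_union_le _ _) (Eventually.of_forall h0)
          (Integrable.add_measure hi.restrict hi.restrict)
    _ ≤ ε := by linarith [hball y]

/-- Normalised Busemann kernel. -/
noncomputable def bker {m : ℕ} (y : EuclideanSpace ℝ (Fin m)) (t : ℝ)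
    (x : EuclideanSpace ℝ (Fin m)) : ℝ :=
  Real.log (t ^ 2 + ‖x - y‖ ^ 2) - Real.log t - Real.log (1 + ‖x‖ ^ 2)

lemma norm_sq_le_aux {m : ℕ} (x y : EuclideanSpace ℝ (Fin m)) :
    ‖x‖ ^ 2 ≤ 2 * ‖x - y‖ ^ 2 + 2 * ‖y‖ ^ 2 ∧ ‖x - y‖ ^ 2 ≤ 2 * ‖x‖ ^ 2 + 2 * ‖y‖ ^ 2 := by
  have := parallelogram_law_with_norm ℝ (x - y) y
  have h2 := parallelogram_law_with_norm ℝ x y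
  rw [sub_add_cancel] at this
  constructor <;> nlinarith [sq_nonneg ‖x - y - y‖, sq_nonneg ‖x + y‖]

lemma bker_eq {m : ℕ} (y : EuclideanSpace ℝ (Fin m)) {t : ℝ} (ht : 0 < t)
    (x : EuclideanSpace ℝ (Fin m)) :
    bker y t x = Real.log ((t ^ 2 + ‖x - y‖ ^ 2) / (t * (1 + ‖x‖ ^ 2))) := by
  unfold bker
  rw [Real.log_div (by positivity) (by positivity), Real.log_mul (by positivity) (by positivity)]
  ring

lemma bker_lower {m : ℕ} (y : EuclideanSpace ℝ (Fin m)) {t : ℝ} (ht : 0 < t)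
    (x : EuclideanSpace ℝ (Fin m)) :
    -Real.log 2 - Real.log ((1 + ‖y‖ ^ 2 + t ^ 2) / t) ≤ bker y t x := by
  rw [bker_eq y ht, ← neg_add', ← Real.log_mul (by positivity) (by positivity), ← Real.log_inv]
  refine Real.log_le_log (by positivity) ?_
  rw [← mul_div_assoc, inv_div, div_le_div_iff₀ (by positivity) (by positivity)]
  have h1 := (norm_sq_le_aux x y).1
  have h2 : t * (t * (1 + ‖x‖ ^ 2)) ≤ t ^ 2 * (1 + 2 * ‖x - y‖ ^ 2 + 2 * ‖y‖ ^ 2) := by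
    nlinarith [sq_nonneg t]
  refine h2.trans ?_
  have e : (t ^ 2 + ‖x - y‖ ^ 2) * (2 * (1 + ‖y‖ ^ 2 + t ^ 2)) -
      t ^ 2 * (1 + 2 * ‖x - y‖ ^ 2 + 2 * ‖y‖ ^ 2) =
      t ^ 2 + 2 * (t ^ 2) ^ 2 + 2 * ‖x - y‖ ^ 2 * (1 + ‖y‖ ^ 2) := by ring
  have : 0 ≤ t ^ 2 + 2 * (t ^ 2) ^ 2 + 2 * ‖x - y‖ ^ 2 * (1 + ‖y‖ ^ 2) := by positivity
  linarith

lemma bker_upper {m : ℕ} (y : EuclideanSpace ℝ (Fin m)) {t : ℝ} (ht : 0 < t)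
    (x : EuclideanSpace ℝ (Fin m)) :
    bker y t x ≤ Real.log 2 + Real.log ((1 + ‖y‖ ^ 2 + t ^ 2) / t) := by
  rw [bker_eq y ht, ← Real.log_mul (by positivity) (by positivity)]
  refine Real.log_le_log (by positivity) ?_
  rw [← mul_div_assoc, div_le_div_iff₀ (by positivity) (by positivity)]
  have h1 := (norm_sq_le_aux x y).2
  have e : 2 * (1 + ‖y‖ ^ 2 + t ^ 2) * (t * (1 + ‖x‖ ^ 2)) - (t ^ 2 + 2 * ‖x‖ ^ 2 + 2 * ‖y‖ ^ 2) * t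
    = t * (2 + t ^ 2 + 2 * ‖y‖ ^ 2 * ‖x‖ ^ 2 + 2 * t ^ 2 * ‖x‖ ^ 2) := by ring
  have : 0 ≤ t * (2 + t ^ 2 + 2 * ‖y‖ ^ 2 * ‖x‖ ^ 2 + 2 * t ^ 2 * ‖x‖ ^ 2) := by positivity
  nlinarith

lemma bker_good {m : ℕ} (y : EuclideanSpace ℝ (Fin m)) {t : ℝ} (ht : 0 < t)
    (x : EuclideanSpace ℝ (Fin m)) {δ : ℝ} (hδ : 0 < δ)
    (hx : δ * ((1 + ‖x‖ ^ 2) * (1 + ‖y‖ ^ 2 + t ^ 2)) ≤ t ^ 2 + ‖x - y‖ ^ 2) :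
    Real.log δ + Real.log ((1 + ‖y‖ ^ 2 + t ^ 2) / t) ≤ bker y t x := by
  rw [bker_eq y ht, ← Real.log_mul (by positivity) (by positivity)]
  refine Real.log_le_log (by positivity) ?_
  rw [← mul_div_assoc, div_le_div_iff₀ (by positivity) (by positivity)]
  nlinarith [mul_le_mul_of_nonneg_right hx ht.le]

lemma bker_cont {m : ℕ} (y : EuclideanSpace ℝ (Fin m)) {t : ℝ} (ht : 0 < t) :
    Continuous (bker y t) := by
  unfold bker
  refine ((Continuous.log (by fun_prop) fun x => (by positivity)).sub continuous_const).sub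
    (Continuous.log (by fun_prop) fun x => (by positivity))

lemma bker_abs {m : ℕ} (y : EuclideanSpace ℝ (Fin m)) {t : ℝ} (ht : 0 < t)
    (x : EuclideanSpace ℝ (Fin m)) :
    |bker y t x| ≤ Real.log 2 + Real.log ((1 + ‖y‖ ^ 2 + t ^ 2) / t) :=
  abs_le.mpr ⟨by linarith [bker_lower y ht x], bker_upper y ht x⟩

lemma bker_integrable {m : ℕ} (y : EuclideanSpace ℝ (Fin m)) {t : ℝ} (ht : 0 < t)
    {h : EuclideanSpace ℝ (Fin m) → ℝ} (hi : Integrable h) :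
    Integrable (fun x => bker y t x * h x) :=
  hi.bdd_mul (bker_cont y ht).aestronglyMeasurable (Eventually.of_forall fun x => by
    rw [Real.norm_eq_abs]; exact bker_abs y ht x)

lemma bker_coercive {m : ℕ} (hm : 3 ≤ m) {h : EuclideanSpace ℝ (Fin m) → ℝ} (h0 : ∀ x, 0 ≤ h x)
    (hi : Integrable h) (hpos : 0 < ∫ x, h x) :
    ∃ a : ℝ, ∀ (y : EuclideanSpace ℝ (Fin m)) (t : ℝ), 0 < t →
      (∫ x, h x) / 2 * Real.log ((1 + ‖y‖ ^ 2 + t ^ 2) / t) - a ≤ ∫ x, bker y t x * h x := by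
  set M := ∫ x, h x with hM
  obtain ⟨δ, hδ, hδ1, hB⟩ := bary_badset hm h0 hi (ε := M / 4) (by positivity)
  refine ⟨M / 4 * Real.log 2 - M * Real.log δ, fun y t ht => ?_⟩
  set B := {x : EuclideanSpace ℝ (Fin m) | t ^ 2 + ‖x - y‖ ^ 2 <
    δ * ((1 + ‖x‖ ^ 2) * (1 + ‖y‖ ^ 2 + t ^ 2))} with hBdef
  have hBm : MeasurableSet B := measurableSet_lt (by fun_prop) (by fun_prop)
  set Λ := Real.log ((1 + ‖y‖ ^ 2 + t ^ 2) / t) with hΛ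
  have hΛ0 : 0 ≤ Λ := by
    refine Real.log_nonneg ?_
    rw [le_div_iff₀ ht]
    nlinarith [sq_nonneg (t - 1), sq_nonneg ‖y‖]
  have hl2 : 0 < Real.log 2 := Real.log_pos (by norm_num)
  have hlδ : Real.log δ ≤ 0 := Real.log_nonpos hδ.le hδ1
  have hBi := hB y t ht
  have hii : Integrable (B.indicator h) := hi.indicator hBm
  have hmono : ∫ x, ((Λ + Real.log δ) * h x - (2 * Λ + Real.log 2) * B.indicator h x) ≤
      ∫ x, bker y t x * h x := by
    refine integral_mono ((hi.const_mul _).sub (hii.const_mul _)) (bker_integrable y ht hi)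
      (fun x => ?_)
    simp only
    by_cases hx : x ∈ B
    · rw [Set.indicator_of_mem hx]
      have := mul_le_mul_of_nonneg_right (bker_lower y ht x) (h0 x)
      rw [← hΛ] at this
      nlinarith [h0 x]
    · rw [Set.indicator_of_notMem hx]
      have := mul_le_mul_of_nonneg_right (bker_good y ht x hδ (not_lt.mp hx)) (h0 x)
      rw [← hΛ] at this
      linarith
  rw [integral_sub (hi.const_mul _) (hii.const_mul _), integral_const_mul, integral_const_mul,
    integral_indicator hBm, ← hM] at hmono
  have := mul_le_mul_of_nonneg_left hBi (by positivity : 0 ≤ 2 * Λ + Real.log 2)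
  nlinarith

lemma bker_exists_min {m : ℕ} (hm : 3 ≤ m) {h : EuclideanSpace ℝ (Fin m) → ℝ} (h0 : ∀ x, 0 ≤ h x)
    (hi : Integrable h) (hpos : 0 < ∫ x, h x) :
    ∃ (y : EuclideanSpace ℝ (Fin m)) (t : ℝ), 0 < t ∧ ∀ y' t', 0 < t' →
      ∫ x, bker y t x * h x ≤ ∫ x, bker y' t' x * h x := by
  obtain ⟨a, ha⟩ := bker_coercive hm h0 hi hpos
  set M := ∫ x, h x with hM
  set G : EuclideanSpace ℝ (Fin m) × ℝ → ℝ := fun p => ∫ x, bker p.1 p.2 x * h x with hG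
  set L : ℝ := max 2 (Real.exp ((G (0, 1) + a) / (M / 2))) with hL
  have hL2 : 2 ≤ L := le_max_left _ _
  have hL0 : 0 < L := by linarith
  set S : Set (EuclideanSpace ℝ (Fin m) × ℝ) :=
    Metric.closedBall 0 L ×ˢ Set.Icc (1 / L) L with hS
  have hSc : IsCompact S := (isCompact_closedBall _ _).prod isCompact_Icc
  have hSpos : ∀ p ∈ S, 0 < p.2 := fun p hp =>
    lt_of_lt_of_le (by positivity) hp.2.1
  have hS0 : ((0, 1) : EuclideanSpace ℝ (Fin m) × ℝ) ∈ S := by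
    refine ⟨by simp [hL0.le], ?_, by linarith⟩
    rw [div_le_one hL0]; linarith
  have hcont : ContinuousOn G S := by
    refine continuousOn_of_dominated
      (bound := fun x => (Real.log 2 + Real.log ((1 + L ^ 2 + L ^ 2) * L)) * h x)
      (fun p hp => (bker_integrable p.1 (hSpos p hp) hi).aestronglyMeasurable)
      (fun p hp => Eventually.of_forall fun x => ?_) (hi.const_mul _)
      (Eventually.of_forall fun x => ?_)
    · rw [Real.norm_eq_abs, abs_mul, abs_of_nonneg (h0 x)]
      refine mul_le_mul_of_nonneg_right ((bker_abs p.1 (hSpos p hp) x).trans ?_) (h0 x)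
      have hp0 := hSpos p hp
      have hy : ‖p.1‖ ≤ L := by simpa using hp.1
      have ht : p.2 ≤ L := hp.2.2
      have ht2 : 1 / L ≤ p.2 := hp.2.1
      have ht3 : 1 ≤ p.2 * L := by rwa [div_le_iff₀ hL0] at ht2
      refine add_le_add_right (Real.log_le_log (by positivity) ?_) _
      rw [div_le_iff₀ hp0]
      have h1 := pow_le_pow_left₀ (norm_nonneg _) hy 2
      have h2 := pow_le_pow_left₀ hp0.le ht 2
      calc 1 + ‖p.1‖ ^ 2 + p.2 ^ 2 ≤ (1 + L ^ 2 + L ^ 2) * 1 := by linarith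
        _ ≤ (1 + L ^ 2 + L ^ 2) * (p.2 * L) := mul_le_mul_of_nonneg_left ht3 (by positivity)
        _ = _ := by ring
    · refine ContinuousOn.mul ?_ continuousOn_const
      unfold bker
      refine ContinuousOn.sub (ContinuousOn.sub (ContinuousOn.log (by fun_prop) ?_)
        (ContinuousOn.log (by fun_prop) fun p hp => (hSpos p hp).ne')) continuousOn_const
      intro p hp
      have := hSpos p hp
      positivity
  obtain ⟨p, hp, hmin⟩ := hSc.exists_isMinOn ⟨_, hS0⟩ hcont
  refine ⟨p.1, p.2, hSpos p hp, fun y' t' ht' => ?_⟩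
  by_cases hin : (y', t') ∈ S
  · exact hmin hin
  · have h01 : G p ≤ G (0, 1) := hmin hS0
    refine h01.trans ?_
    by_contra! hlt
    apply hin
    have hc := ha y' t' ht'
    have h1 : Real.log ((1 + ‖y'‖ ^ 2 + t' ^ 2) / t') ≤ (G (0, 1) + a) / (M / 2) := by
      rw [le_div_iff₀ (by positivity)]; linarith
    have h2 : (1 + ‖y'‖ ^ 2 + t' ^ 2) / t' ≤ L := by
      rw [Real.log_le_iff_le_exp (by positivity)] at h1
      exact h1.trans (le_max_right _ _)
    rw [div_le_iff₀ ht'] at h2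
    have ht1 : t' ≤ L := by
      by_contra! hh
      nlinarith [sq_nonneg ‖y'‖]
    have ht2 : 1 ≤ t' * L := by nlinarith [sq_nonneg ‖y'‖, sq_nonneg t']
    refine ⟨?_, ?_, ht1⟩
    · rw [mem_closedBall_zero_iff]
      refine (sq_le_sq₀ (norm_nonneg _) hL0.le).mp ?_
      nlinarith [sq_nonneg t']
    · change 1 / L ≤ t'
      rw [div_le_iff₀ hL0]; exact ht2

lemma barycenter {m : ℕ} (hm : 3 ≤ m) {h : EuclideanSpace ℝ (Fin m) → ℝ} (h0 : ∀ x, 0 ≤ h x)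
    (hi : Integrable h) (hpos : 0 < ∫ x, h x) :
    ∃ (y : EuclideanSpace ℝ (Fin m)) (t : ℝ), 0 < t ∧
      (∀ i, ∫ x, (2 * t * (x i - y i) / (t ^ 2 + ‖x - y‖ ^ 2)) * h x = 0) ∧
      ∫ x, ((t ^ 2 - ‖x - y‖ ^ 2) / (t ^ 2 + ‖x - y‖ ^ 2)) * h x = 0 := by
  obtain ⟨y, t, ht, hmin⟩ := bker_exists_min hm h0 hi hpos
  refine ⟨y, t, ht, fun i => ?_, ?_⟩
  · set e : EuclideanSpace ℝ (Fin m) := EuclideanSpace.single i 1 with he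
    have hd : ∀ (x : EuclideanSpace ℝ (Fin m)) (s : ℝ), HasDerivAt (fun s : ℝ => bker (y + s • e) t x * h x)
        ((2 * ((y + s • e) i - x i) / (t ^ 2 + ‖x - (y + s • e)‖ ^ 2)) * h x) s := by
      intro x s
      have h1 : HasDerivAt (fun s : ℝ => x - (y + s • e)) (-e) s := by
        have := (((hasDerivAt_id s).smul_const e).const_add y).const_sub x
        simpa using this
      have h2 := h1.norm_sq.const_add (t ^ 2)
      have h3 := ((h2.log (by positivity)).sub_const (Real.log t)).sub_const
        (Real.log (1 + ‖x‖ ^ 2))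
      refine (h3.mul_const (h x)).congr_deriv ?_
      congr 2
      rw [inner_neg_right, he, EuclideanSpace.inner_single_right]
      simp
    have hb : ∀ (x : EuclideanSpace ℝ (Fin m)) (s : ℝ), |2 * ((y + s • e) i - x i) / (t ^ 2 + ‖x - (y + s • e)‖ ^ 2)| ≤ 1 / t := by
      intro x s
      set z := x - (y + s • e) with hz
      have hzi : (y + s • e) i - x i = - z i := by simp [hz]
      have hzn : |z i| ≤ ‖z‖ := by
        have := PiLp.norm_apply_le z i
        simpa using this
      rw [hzi, abs_div, abs_of_pos (by positivity : 0 < t ^ 2 + ‖z‖ ^ 2),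
        div_le_div_iff₀ (by positivity) ht, abs_mul, abs_neg, abs_two]
      nlinarith [sq_nonneg (t - ‖z‖)]
    have hm1 : ∀ s : ℝ, Continuous (fun x : EuclideanSpace ℝ (Fin m) =>
        2 * ((y + s • e) i - x i) / (t ^ 2 + ‖x - (y + s • e)‖ ^ 2)) := by
      intro s
      refine Continuous.div (by fun_prop) (by fun_prop) fun x => by positivity
    have key := (hasDerivAt_integral_of_dominated_loc_of_deriv_le (μ := volume)
      (F := fun (s : ℝ) x => bker (y + s • e) t x * h x) (x₀ := 0) (s := Set.univ)
      (F' := fun s x => (2 * ((y + s • e) i - x i) / (t ^ 2 + ‖x - (y + s • e)‖ ^ 2)) * h x)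
      (bound := fun x => 1 / t * h x) Filter.univ_mem
      (Eventually.of_forall fun s => (bker_integrable _ ht hi).aestronglyMeasurable)
      (bker_integrable _ ht hi)
      ((hm1 0).aestronglyMeasurable.mul hi.aestronglyMeasurable)
      (Eventually.of_forall fun x s _ => by
        rw [Real.norm_eq_abs, abs_mul, abs_of_nonneg (h0 x)]
        exact mul_le_mul_of_nonneg_right (hb x s) (h0 x))
      (hi.const_mul _) (Eventually.of_forall fun x s _ => hd x s)).2
    have hloc : IsLocalMin (fun s : ℝ => ∫ x, bker (y + s • e) t x * h x) 0 :=
      Eventually.of_forall fun s => by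
        simp only [zero_smul, add_zero]
        exact hmin _ _ ht
    have hz := hloc.hasDerivAt_eq_zero key
    simp only [zero_smul, add_zero] at hz
    have : ∫ x, (2 * t * (x i - y i) / (t ^ 2 + ‖x - y‖ ^ 2)) * h x =
        (-t) * ∫ x, (2 * (y i - x i) / (t ^ 2 + ‖x - y‖ ^ 2)) * h x := by
      rw [← integral_const_mul]
      refine integral_congr_ae (Eventually.of_forall fun x => ?_)
      simp only
      ring
    rw [this, hz, mul_zero]
  · have hd : ∀ (x : EuclideanSpace ℝ (Fin m)) (s : ℝ), s ∈ Set.Ioi (t / 2) → HasDerivAt (fun s : ℝ => bker y s x * h x)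
        ((2 * s / (s ^ 2 + ‖x - y‖ ^ 2) - 1 / s) * h x) s := by
      intro x s hs
      have hs0 : 0 < s := by have : t / 2 < s := hs; linarith
      have h2 := (hasDerivAt_pow 2 s).add_const (‖x - y‖ ^ 2)
      have h3 := ((h2.log (by positivity)).sub (Real.hasDerivAt_log hs0.ne')).sub_const
        (Real.log (1 + ‖x‖ ^ 2))
      refine (h3.mul_const (h x)).congr_deriv ?_
      simp
    have heq : ∀ (x : EuclideanSpace ℝ (Fin m)) (s : ℝ), 0 < s → 2 * s / (s ^ 2 + ‖x - y‖ ^ 2) - 1 / s =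
        (1 / s) * ((s ^ 2 - ‖x - y‖ ^ 2) / (s ^ 2 + ‖x - y‖ ^ 2)) := by
      intro x s hs
      field_simp
      ring
    have hb : ∀ (x : EuclideanSpace ℝ (Fin m)) (s : ℝ), s ∈ Set.Ioi (t / 2) →
        |2 * s / (s ^ 2 + ‖x - y‖ ^ 2) - 1 / s| ≤ 2 / t := by
      intro x s hs
      have hs1 : t / 2 < s := hs
      have hs0 : 0 < s := by linarith
      rw [heq x s hs0, abs_mul, abs_of_pos (by positivity : 0 < 1 / s)]
      have h1 : |(s ^ 2 - ‖x - y‖ ^ 2) / (s ^ 2 + ‖x - y‖ ^ 2)| ≤ 1 := by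
        rw [abs_div, abs_of_pos (by positivity : 0 < s ^ 2 + ‖x - y‖ ^ 2),
          div_le_one (by positivity), abs_le]
        constructor <;> nlinarith [sq_nonneg s, sq_nonneg ‖x - y‖]
      have h2 : 1 / s ≤ 2 / t := by
        rw [div_le_div_iff₀ hs0 ht]; linarith
      calc _ ≤ 1 / s * 1 := mul_le_mul_of_nonneg_left h1 (by positivity)
        _ ≤ 2 / t := by linarith
    have hm1 : Continuous (fun x : EuclideanSpace ℝ (Fin m) =>
        2 * t / (t ^ 2 + ‖x - y‖ ^ 2) - 1 / t) :=
      (Continuous.div (by fun_prop) (by fun_prop) fun x => by positivity).sub continuous_const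
    have hn : Set.Ioi (t / 2) ∈ 𝓝 t := Ioi_mem_nhds (by linarith)
    have key := (hasDerivAt_integral_of_dominated_loc_of_deriv_le (μ := volume)
      (F := fun (s : ℝ) x => bker y s x * h x) (x₀ := t) (s := Set.Ioi (t / 2))
      (F' := fun s x => (2 * s / (s ^ 2 + ‖x - y‖ ^ 2) - 1 / s) * h x)
      (bound := fun x => 2 / t * h x) hn
      (by
        filter_upwards [hn] with s hs
        have hs1 : t / 2 < s := hs
        exact (bker_integrable y (by linarith) hi).aestronglyMeasurable)
      (bker_integrable _ ht hi)
      (hm1.aestronglyMeasurable.mul hi.aestronglyMeasurable)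
      (Eventually.of_forall fun x s hs => by
        rw [Real.norm_eq_abs, abs_mul, abs_of_nonneg (h0 x)]
        exact mul_le_mul_of_nonneg_right (hb x s hs) (h0 x))
      (hi.const_mul _) (Eventually.of_forall fun x s hs => hd x s hs)).2
    have hloc : IsLocalMin (fun s : ℝ => ∫ x, bker y s x * h x) t := by
      filter_upwards [hn] with s hs
      have hs1 : t / 2 < s := hs
      exact hmin _ _ (by linarith)
    have hz := hloc.hasDerivAt_eq_zero key
    have : ∫ x, ((t ^ 2 - ‖x - y‖ ^ 2) / (t ^ 2 + ‖x - y‖ ^ 2)) * h x =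
        t * ∫ x, (2 * t / (t ^ 2 + ‖x - y‖ ^ 2) - 1 / t) * h x := by
      rw [← integral_const_mul]
      refine integral_congr_ae (Eventually.of_forall fun x => ?_)
      simp only
      rw [heq x t ht]
      field_simp
    rw [this, hz, mul_zero]


lemma norm_sq_coord {m : ℕ} (T : EuclideanSpace ℝ (Fin m) →L[ℝ] ℝ) :
    ‖T‖ ^ 2 = ∑ i, (T (EuclideanSpace.single i 1)) ^ 2 := by
  set v := (InnerProductSpace.toDual ℝ (EuclideanSpace ℝ (Fin m))).symm T with hv
  have h1 : ‖T‖ = ‖v‖ := by rw [hv, LinearIsometryEquiv.norm_map]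
  rw [h1, EuclideanSpace.real_norm_sq_eq]
  refine Finset.sum_congr rfl fun i _ => ?_
  have h2 : inner ℝ v (EuclideanSpace.single i (1 : ℝ)) = T (EuclideanSpace.single i 1) := by
    rw [hv, InnerProductSpace.toDual_symm_apply]
  rw [← h2, EuclideanSpace.inner_single_right]
  simp

lemma cfW_hasFDerivAt {m : ℕ} (y : EuclideanSpace ℝ (Fin m)) {t : ℝ} (ht : 0 < t)
    (x : EuclideanSpace ℝ (Fin m)) :
    HasFDerivAt (cfW y t) ((-(2 / t) * cfW y t x ^ 2) • innerSL ℝ (x - y)) x := by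
  have h1 : HasFDerivAt (fun x : EuclideanSpace ℝ (Fin m) => t ^ 2 + ‖x - y‖ ^ 2)
      ((2 : ℝ) • innerSL ℝ (x - y)) x := by
    have := (((hasFDerivAt_id x).sub_const y).norm_sq).const_add (t ^ 2)
    refine this.congr_fderiv ?_
    ext v
    simp
  have hN := cfW_den_pos y ht x
  have h2 := ((hasDerivAt_inv hN.ne').const_mul t).comp_hasFDerivAt x h1
  refine (h2.congr_fderiv ?_).congr_of_eventuallyEq (Eventually.of_forall fun x => ?_)
  · ext v
    simp only [smul_smul, smul_apply, smul_eq_mul, cfW]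
    congr 1
    field_simp
  · simp [cfW, div_eq_mul_inv]

lemma cfW_contDiff {m : ℕ} (y : EuclideanSpace ℝ (Fin m)) {t : ℝ} (ht : 0 < t) :
    ContDiff ℝ 1 (cfW y t) := by
  unfold cfW
  refine ContDiff.div contDiff_const ?_ (fun x => (cfW_den_pos y ht x).ne')
  exact contDiff_const.add ((contDiff_id.sub contDiff_const).norm_sq ℝ)

lemma cfW_mul_den {m : ℕ} (y : EuclideanSpace ℝ (Fin m)) {t : ℝ} (ht : 0 < t)
    (x : EuclideanSpace ℝ (Fin m)) :
    cfW y t x * (t ^ 2 + ∑ i, (x i - y i) ^ 2) = t := by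
  have h := cfW_den_pos y ht x
  have : ‖x - y‖ ^ 2 = ∑ i, (x i - y i) ^ 2 := by
    rw [EuclideanSpace.real_norm_sq_eq]; simp
  unfold cfW
  rw [← this]
  field_simp

lemma cfW_fderiv_single {m : ℕ} (y : EuclideanSpace ℝ (Fin m)) {t : ℝ} (ht : 0 < t)
    (x : EuclideanSpace ℝ (Fin m)) (k : Fin m) :
    fderiv ℝ (cfW y t) x (EuclideanSpace.single k 1) =
      -(2 / t) * cfW y t x ^ 2 * (x k - y k) := by
  rw [(cfW_hasFDerivAt y ht x).fderiv, smul_apply, innerSL_apply_apply,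
    EuclideanSpace.inner_single_right]
  simp

lemma coord_single {m : ℕ} (i k : Fin m) :
    (EuclideanSpace.proj i : EuclideanSpace ℝ (Fin m) →L[ℝ] ℝ) (EuclideanSpace.single k 1) =
      if i = k then 1 else 0 := by
  change (EuclideanSpace.single k (1 : ℝ) : EuclideanSpace ℝ (Fin m)) i = _
  rw [PiLp.single_apply]

lemma coord_hasFDerivAt {m : ℕ} (y : EuclideanSpace ℝ (Fin m)) (i : Fin m)
    (x : EuclideanSpace ℝ (Fin m)) :
    HasFDerivAt (fun x : EuclideanSpace ℝ (Fin m) => x i - y i)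
      (EuclideanSpace.proj i : EuclideanSpace ℝ (Fin m) →L[ℝ] ℝ) x :=
  ((EuclideanSpace.proj i : EuclideanSpace ℝ (Fin m) →L[ℝ] ℝ).hasFDerivAt).sub_const _

lemma coord_contDiff {m : ℕ} (y : EuclideanSpace ℝ (Fin m)) (i : Fin m) :
    ContDiff ℝ 1 (fun x : EuclideanSpace ℝ (Fin m) => x i - y i) :=
  ((EuclideanSpace.proj i : EuclideanSpace ℝ (Fin m) →L[ℝ] ℝ).contDiff).sub contDiff_const

/-- pulled back sphere coordinates -/
noncomputable def psi0 {m : ℕ} (y : EuclideanSpace ℝ (Fin m)) (t : ℝ)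
    (x : EuclideanSpace ℝ (Fin m)) : ℝ := 2 * t * cfW y t x - 1

noncomputable def psiI {m : ℕ} (y : EuclideanSpace ℝ (Fin m)) (t : ℝ) (i : Fin m)
    (x : EuclideanSpace ℝ (Fin m)) : ℝ := 2 * cfW y t x * (x i - y i)

lemma psi0_contDiff {m : ℕ} (y : EuclideanSpace ℝ (Fin m)) {t : ℝ} (ht : 0 < t) :
    ContDiff ℝ 1 (psi0 y t) :=
  (contDiff_const.mul (cfW_contDiff y ht)).sub contDiff_const

lemma psiI_contDiff {m : ℕ} (y : EuclideanSpace ℝ (Fin m)) {t : ℝ} (ht : 0 < t) (i : Fin m) :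
    ContDiff ℝ 1 (psiI y t i) :=
  (contDiff_const.mul (cfW_contDiff y ht)).mul (coord_contDiff y i)

lemma psi0_fderiv {m : ℕ} (y : EuclideanSpace ℝ (Fin m)) {t : ℝ} (ht : 0 < t)
    (x : EuclideanSpace ℝ (Fin m)) (k : Fin m) :
    fderiv ℝ (psi0 y t) x (EuclideanSpace.single k 1) = -4 * cfW y t x ^ 2 * (x k - y k) := by
  have h := (((cfW_hasFDerivAt y ht x).const_mul (2 * t)).sub_const 1).fderiv
  change fderiv ℝ (fun x => 2 * t * cfW y t x - 1) x _ = _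
  rw [h, ← (cfW_hasFDerivAt y ht x).fderiv, smul_apply,
    cfW_fderiv_single y ht, smul_eq_mul]
  field_simp
  ring

lemma psiI_fderiv {m : ℕ} (y : EuclideanSpace ℝ (Fin m)) {t : ℝ} (ht : 0 < t)
    (x : EuclideanSpace ℝ (Fin m)) (i k : Fin m) :
    fderiv ℝ (psiI y t i) x (EuclideanSpace.single k 1) =
      2 * cfW y t x * (if i = k then 1 else 0)
      - 4 / t * cfW y t x ^ 2 * (x k - y k) * (x i - y i) := by
  have h := (((cfW_hasFDerivAt y ht x).const_mul 2).fun_mul (coord_hasFDerivAt y i x)).fderiv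
  change fderiv ℝ (fun x => 2 * cfW y t x * (x i - y i)) x _ = _
  rw [h, ← (cfW_hasFDerivAt y ht x).fderiv]
  simp only [add_apply, smul_apply,
    cfW_fderiv_single y ht, smul_eq_mul, coord_single]
  ring

lemma psi_sq_sum {m : ℕ} (y : EuclideanSpace ℝ (Fin m)) {t : ℝ} (ht : 0 < t)
    (x : EuclideanSpace ℝ (Fin m)) :
    psi0 y t x ^ 2 + ∑ i, psiI y t i x ^ 2 = 1 := by
  have h := cfW_mul_den y ht x
  unfold psi0 psiI
  simp only [mul_pow, ← Finset.mul_sum]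
  set n := ∑ i, (x i - y i) ^ 2
  linear_combination (4 * cfW y t x) * h

lemma psi0_abs {m : ℕ} (y : EuclideanSpace ℝ (Fin m)) {t : ℝ} (ht : 0 < t)
    (x : EuclideanSpace ℝ (Fin m)) : |psi0 y t x| ≤ 1 := by
  have h := psi_sq_sum y ht x
  have h1 : 0 ≤ ∑ i, psiI y t i x ^ 2 := Finset.sum_nonneg fun i _ => sq_nonneg _
  rw [← sq_le_one_iff_abs_le_one]; linarith

lemma psiI_abs {m : ℕ} (y : EuclideanSpace ℝ (Fin m)) {t : ℝ} (ht : 0 < t) (i : Fin m)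
    (x : EuclideanSpace ℝ (Fin m)) : |psiI y t i x| ≤ 1 := by
  have h := psi_sq_sum y ht x
  have h1 : psiI y t i x ^ 2 ≤ ∑ i, psiI y t i x ^ 2 :=
    Finset.single_le_sum (f := fun i => psiI y t i x ^ 2) (fun i _ => sq_nonneg _)
      (Finset.mem_univ i)
  rw [← sq_le_one_iff_abs_le_one]; nlinarith [sq_nonneg (psi0 y t x)]

lemma psi_grad_sum {m : ℕ} (y : EuclideanSpace ℝ (Fin m)) {t : ℝ} (ht : 0 < t)
    {f : EuclideanSpace ℝ (Fin m) → ℝ} (hf : Differentiable ℝ f)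
    (x : EuclideanSpace ℝ (Fin m)) :
    ‖fderiv ℝ (fun x => psi0 y t x * f x) x‖ ^ 2
      + ∑ i, ‖fderiv ℝ (fun x => psiI y t i x * f x) x‖ ^ 2 =
    ‖fderiv ℝ f x‖ ^ 2 + 4 * m * (cfW y t x ^ 2 * f x ^ 2) := by
  have h := cfW_mul_den y ht x
  have hs := psi_sq_sum y ht x
  have d0 : ∀ k, fderiv ℝ (fun x => psi0 y t x * f x) x (EuclideanSpace.single k 1) =
      psi0 y t x * fderiv ℝ f x (EuclideanSpace.single k 1)
      + f x * (-4 * cfW y t x ^ 2 * (x k - y k)) := by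
    intro k
    rw [fderiv_fun_mul ((psi0_contDiff y ht).differentiable one_ne_zero x) (hf x)]
    simp only [add_apply, smul_apply, smul_eq_mul,
      psi0_fderiv y ht]
  have dI : ∀ i k, fderiv ℝ (fun x => psiI y t i x * f x) x (EuclideanSpace.single k 1) =
      psiI y t i x * fderiv ℝ f x (EuclideanSpace.single k 1)
      + f x * (2 * cfW y t x * (if i = k then 1 else 0)
      - 4 / t * cfW y t x ^ 2 * (x k - y k) * (x i - y i)) := by
    intro i k
    rw [fderiv_fun_mul ((psiI_contDiff y ht i).differentiable one_ne_zero x) (hf x)]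
    simp only [add_apply, smul_apply, smul_eq_mul,
      psiI_fderiv y ht]
  simp only [norm_sq_coord]
  rw [Finset.sum_comm, ← Finset.sum_add_distrib]
  have hm : (4 : ℝ) * m * (cfW y t x ^ 2 * f x ^ 2) =
      ∑ _k : Fin m, 4 * (cfW y t x ^ 2 * f x ^ 2) := by
    simp; ring
  rw [hm, ← Finset.sum_add_distrib]
  refine Finset.sum_congr rfl fun k _ => ?_
  rw [d0]
  simp only [dI]
  set p := fderiv ℝ f x (EuclideanSpace.single k 1)
  set w := cfW y t x with hw
  set c := 4 / t * w ^ 2 * (x k - y k) with hc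
  have e : ∀ i, (psiI y t i x * p + f x * (2 * w * (if i = k then 1 else 0) -
      c * (x i - y i))) ^ 2 =
      p ^ 2 * psiI y t i x ^ 2 + (if i = k then
        (8 * w ^ 2 * (x k - y k) * f x * p + 4 * f x ^ 2 * w ^ 2
          - 4 * f x ^ 2 * w * c * (x k - y k)) else 0)
      + (f x ^ 2 * c ^ 2 - 4 * f x * p * w * c) * (x i - y i) ^ 2 := by
    intro i
    unfold psiI
    rw [← hw]
    split_ifs with hik
    · subst hik; ring
    · ring
  simp only [e]
  rw [Finset.sum_add_distrib, Finset.sum_add_distrib, ← Finset.mul_sum, ← Finset.mul_sum]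
  simp only [Finset.sum_ite_eq', Finset.mem_univ, if_true]
  have hs' : ∑ i, psiI y t i x ^ 2 = 1 - psi0 y t x ^ 2 := by linarith
  rw [hs']
  set n := ∑ i, (x i - y i) ^ 2
  have hp0 : psi0 y t x = 2 * t * w - 1 := rfl
  have hn : w * n = t - w * t ^ 2 := by linarith
  have hn2 : w ^ 2 * n = w * (t - w * t ^ 2) := by rw [← hn]; ring
  have e2 : (f x ^ 2 * c ^ 2 - 4 * f x * p * w * c) * n =
      (f x ^ 2 * (16 / t ^ 2 * w ^ 2 * (x k - y k) ^ 2)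
        - 16 / t * f x * p * w * (x k - y k)) * (w * (t - w * t ^ 2)) := by
    rw [← hn2, hc]; field_simp; ring
  rw [e2, hp0, hc]
  field_simp
  ring


lemma conf_ineq {m : ℕ} (hm : 3 ≤ m) {b : EuclideanSpace ℝ (Fin m) → ℝ}
    {f : EuclideanSpace ℝ (Fin m) → ℝ} (hf : Admissible m f)
    (hmin : ∀ g, Admissible m g → sobolevQuot m b f ≤ sobolevQuot m b g)
    (hbf : ∀ x, b x * f x ^ 2 = 0) :
    ∃ (y : EuclideanSpace ℝ (Fin m)) (t : ℝ), 0 < t ∧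
      ∫ x, ‖fderiv ℝ f x‖ ^ 2 ≤ m * (m - 2) * ∫ x, cfW y t x ^ 2 * f x ^ 2 := by
  have hf' := hf
  obtain ⟨hf1, hfi, hfp, hfd⟩ := hf'
  have hm' : (3 : ℝ) ≤ m := by exact_mod_cast hm
  set q : ℝ := (2 * (m : ℝ)) / ((m : ℝ) - 2) with hq
  obtain ⟨y, t, ht, hI, h0⟩ := barycenter hm (h := fun x => |f x| ^ q)
    (fun x => by positivity) hfi hfp
  refine ⟨y, t, ht, ?_⟩
  have hI' : ∀ i, ∫ x, psiI y t i x * |f x| ^ q = 0 := by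
    intro i
    rw [← hI i]
    refine integral_congr_ae (Eventually.of_forall fun x => ?_)
    simp only [psiI, cfW]
    ring
  have h0' : ∫ x, psi0 y t x * |f x| ^ q = 0 := by
    rw [← h0]
    refine integral_congr_ae (Eventually.of_forall fun x => ?_)
    simp only [psi0, cfW]
    have := cfW_den_pos y ht x
    congr 1
    field_simp
    ring
  have hW := cfW_sq_integrable hm y ht hf1.continuous hfi
  have hfdiff : Differentiable ℝ f := hf1.differentiable one_ne_zero
  -- gradient bounds of psi
  have hone : ∀ x, ‖fderiv ℝ (psi0 y t) x‖ ^ 2 + ∑ i, ‖fderiv ℝ (psiI y t i) x‖ ^ 2 =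
      4 * m * cfW y t x ^ 2 := by
    intro x
    have := psi_grad_sum y ht (f := fun _ => 1) (by fun_prop) x
    simpa using this
  have hgb : ∀ ψ : EuclideanSpace ℝ (Fin m) → ℝ, ContDiff ℝ 1 ψ →
      (∀ x, ‖fderiv ℝ ψ x‖ ^ 2 ≤ 4 * m * cfW y t x ^ 2) →
      Integrable (fun x => f x ^ 2 * ‖fderiv ℝ ψ x‖ ^ 2) := by
    intro ψ hψ hb
    refine (hW.const_mul (4 * m)).mono' ?_ (Eventually.of_forall fun x => ?_)
    · exact ((hf1.continuous.pow 2).mul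
        ((hψ.continuous_fderiv one_ne_zero).norm.pow 2)).aestronglyMeasurable
    · rw [Real.norm_eq_abs, abs_of_nonneg (by positivity)]
      nlinarith [mul_le_mul_of_nonneg_left (hb x) (sq_nonneg (f x))]
  have hb0 : ∀ x, ‖fderiv ℝ (psi0 y t) x‖ ^ 2 ≤ 4 * m * cfW y t x ^ 2 := by
    intro x
    have h1 : 0 ≤ ∑ i, ‖fderiv ℝ (psiI y t i) x‖ ^ 2 := Finset.sum_nonneg fun i _ => sq_nonneg _
    linarith [hone x]
  have hbI : ∀ i x, ‖fderiv ℝ (psiI y t i) x‖ ^ 2 ≤ 4 * m * cfW y t x ^ 2 := by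
    intro i x
    have h1 : ‖fderiv ℝ (psiI y t i) x‖ ^ 2 ≤ ∑ i, ‖fderiv ℝ (psiI y t i) x‖ ^ 2 :=
      Finset.single_le_sum (f := fun i => ‖fderiv ℝ (psiI y t i) x‖ ^ 2)
        (fun i _ => sq_nonneg _) (Finset.mem_univ i)
    nlinarith [hone x, sq_nonneg ‖fderiv ℝ (psi0 y t) x‖]
  have s0 := second_var hm hf hmin hbf (psi0_contDiff y ht) (psi0_abs y ht)
    (hgb _ (psi0_contDiff y ht) hb0) h0'
  have sI := fun i => second_var hm hf hmin hbf (psiI_contDiff y ht i) (psiI_abs y ht i)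
    (hgb _ (psiI_contDiff y ht i) (hbI i)) (hI' i)
  rw [← hq] at s0
  simp only [← hq] at sI
  have hsum := add_le_add s0 (Finset.sum_le_sum fun i (_ : i ∈ Finset.univ) => sI i)
  rw [← Finset.mul_sum, ← Finset.mul_sum, ← mul_add, ← mul_add] at hsum
  have hsqi : ∀ ψ : EuclideanSpace ℝ (Fin m) → ℝ, Continuous ψ → (∀ x, |ψ x| ≤ 1) →
      Integrable (fun x => ψ x ^ 2 * |f x| ^ q) := by
    intro ψ hc hb
    refine hfi.bdd_mul (c := 1) (hc.pow 2).aestronglyMeasurable (Eventually.of_forall fun x => ?_)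
    rw [Real.norm_eq_abs, abs_of_nonneg (sq_nonneg _)]
    exact sq_le_one_iff_abs_le_one _ |>.mpr (hb x)
  have e1 : (∫ x, psi0 y t x ^ 2 * |f x| ^ q) + ∑ i, ∫ x, psiI y t i x ^ 2 * |f x| ^ q
      = critInt m f := by
    rw [← integral_finsetSum _ fun i _ =>
        hsqi _ (psiI_contDiff y ht i).continuous (psiI_abs y ht i),
      ← integral_add (hsqi _ (psi0_contDiff y ht).continuous (psi0_abs y ht))
        (integrable_finsetSum _ fun i _ =>
        hsqi _ (psiI_contDiff y ht i).continuous (psiI_abs y ht i))]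
    unfold critInt
    refine integral_congr_ae (Eventually.of_forall fun x => ?_)
    simp only
    rw [← Finset.sum_mul, ← add_mul, psi_sq_sum y ht, one_mul]
  have hDi : ∀ ψ : EuclideanSpace ℝ (Fin m) → ℝ, ContDiff ℝ 1 ψ →
      (∀ x, ‖fderiv ℝ (fun x => ψ x * f x) x‖ ^ 2 ≤
        ‖fderiv ℝ f x‖ ^ 2 + 4 * m * (cfW y t x ^ 2 * f x ^ 2)) →
      Integrable (fun x => ‖fderiv ℝ (fun x => ψ x * f x) x‖ ^ 2) := by
    intro ψ hψ hb
    refine (hfd.add (hW.const_mul (4 * m))).mono' ?_ (Eventually.of_forall fun x => ?_)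
    · exact (((hψ.mul hf1).continuous_fderiv one_ne_zero).norm.pow 2).aestronglyMeasurable
    · rw [Real.norm_eq_abs, abs_of_nonneg (by positivity)]
      exact hb x
  have hD0 := hDi _ (psi0_contDiff y ht) fun x => by
    rw [← psi_grad_sum y ht hfdiff x]
    exact le_add_of_nonneg_right (Finset.sum_nonneg fun i _ => sq_nonneg _)
  have hDI := fun i => hDi _ (psiI_contDiff y ht i) fun x => by
    rw [← psi_grad_sum y ht hfdiff x]
    exact le_add_of_nonneg_of_le (sq_nonneg _)
      (Finset.single_le_sum (f := fun i => ‖fderiv ℝ (fun x => psiI y t i x * f x) x‖ ^ 2)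
        (fun i _ => sq_nonneg _) (Finset.mem_univ i))
  have e2 : (∫ x, ‖fderiv ℝ (fun x => psi0 y t x * f x) x‖ ^ 2)
      + ∑ i, ∫ x, ‖fderiv ℝ (fun x => psiI y t i x * f x) x‖ ^ 2
      = (∫ x, ‖fderiv ℝ f x‖ ^ 2) + 4 * m * ∫ x, cfW y t x ^ 2 * f x ^ 2 := by
    rw [← integral_finsetSum _ fun i _ => hDI i,
      ← integral_add hD0 (integrable_finsetSum _ fun i _ => hDI i),
      ← integral_const_mul, ← integral_add hfd (hW.const_mul _)]
    exact integral_congr_ae (Eventually.of_forall fun x => psi_grad_sum y ht hfdiff x)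
  rw [e1, e2] at hsum
  set A := ∫ x, ‖fderiv ℝ f x‖ ^ 2
  set H := ∫ x, cfW y t x ^ 2 * f x ^ 2
  have h3 : (q - 1) * A ≤ A + 4 * m * H := by
    rw [mul_comm (critInt m f)] at hsum
    exact le_of_mul_le_mul_right hsum hfp
  have h4 : q = 2 + 4 / (m - 2) := by
    rw [hq]
    have : (m : ℝ) - 2 ≠ 0 := by linarith
    field_simp
    ring
  have h5 : 4 / ((m : ℝ) - 2) * A ≤ 4 * m * H := by rw [h4] at h3; linarith
  rw [div_mul_eq_mul_div, div_le_iff₀ (by linarith)] at h5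
  linarith


/-- truncated vector field -/
noncomputable def xfld {m : ℕ} (y : EuclideanSpace ℝ (Fin m)) (t R : ℝ) (i : Fin m)
    (x : EuclideanSpace ℝ (Fin m)) : ℝ :=
  -((m : ℝ) - 2) * (R ^ 2 / t) * ((cfW y R x * cfW y R x) * (cfW y t x * (x i - y i)))

lemma xfld_contDiff {m : ℕ} (y : EuclideanSpace ℝ (Fin m)) {t R : ℝ} (ht : 0 < t) (hR : 0 < R)
    (i : Fin m) : ContDiff ℝ 1 (xfld y t R i) :=
  contDiff_const.mul (((cfW_contDiff y hR).mul (cfW_contDiff y hR)).mul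
    ((cfW_contDiff y ht).mul (coord_contDiff y i)))

lemma xfld_fderiv {m : ℕ} (y : EuclideanSpace ℝ (Fin m)) {t R : ℝ} (ht : 0 < t) (hR : 0 < R)
    (i : Fin m) (x : EuclideanSpace ℝ (Fin m)) :
    fderiv ℝ (xfld y t R i) x (EuclideanSpace.single i 1) =
      -((m : ℝ) - 2) * (R ^ 2 / t) * (cfW y R x ^ 2 * (cfW y t x
        - 4 / R * cfW y R x * cfW y t x * (x i - y i) ^ 2
        - 2 / t * cfW y t x ^ 2 * (x i - y i) ^ 2)) := by
  have hY := cfW_hasFDerivAt y hR x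
  have h := (((hY.fun_mul hY).fun_mul ((cfW_hasFDerivAt y ht x).fun_mul
    (coord_hasFDerivAt y i x))).const_mul (-((m : ℝ) - 2) * (R ^ 2 / t))).fderiv
  change fderiv ℝ (fun x => -((m : ℝ) - 2) * (R ^ 2 / t) *
    ((cfW y R x * cfW y R x) * (cfW y t x * (x i - y i)))) x _ = _
  rw [h, ← (cfW_hasFDerivAt y ht x).fderiv, ← hY.fderiv]
  simp only [add_apply, smul_apply, cfW_fderiv_single y ht, cfW_fderiv_single y hR,
    smul_eq_mul, coord_single, if_true]
  ring

lemma cfW_mul_le {m : ℕ} (y : EuclideanSpace ℝ (Fin m)) {t : ℝ} (ht : 0 < t)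
    (x : EuclideanSpace ℝ (Fin m)) : t * cfW y t x ≤ 1 := by
  unfold cfW
  have := cfW_den_pos y ht x
  rw [← mul_div_assoc, div_le_one this]
  nlinarith [sq_nonneg ‖x - y‖]

lemma cfW_coord_le {m : ℕ} (y : EuclideanSpace ℝ (Fin m)) {t : ℝ} (ht : 0 < t) (i : Fin m)
    (x : EuclideanSpace ℝ (Fin m)) : cfW y t x * |x i - y i| ≤ 1 := by
  have := psiI_abs y ht i x
  unfold psiI at this
  have hp := cfW_pos y ht x
  rw [abs_mul, abs_mul, abs_two, abs_of_pos hp] at this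
  nlinarith [mul_nonneg hp.le (abs_nonneg (x i - y i))]

lemma xfld_abs {m : ℕ} (hm : 3 ≤ m) (y : EuclideanSpace ℝ (Fin m)) {t R : ℝ} (ht : 0 < t)
    (hR : 0 < R) (i : Fin m) (x : EuclideanSpace ℝ (Fin m)) :
    |xfld y t R i x| ≤ ((m : ℝ) - 2) * (R ^ 2 / t) * cfW y R x ^ 2 := by
  have hm' : (3 : ℝ) ≤ m := by exact_mod_cast hm
  have hm2 : (0 : ℝ) < (m : ℝ) - 2 := by linarith
  have hp := cfW_pos y ht x
  unfold xfld
  rw [abs_mul, abs_mul, abs_neg, abs_of_pos hm2, abs_of_pos (by positivity : 0 < R ^ 2 / t)]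
  refine mul_le_mul_of_nonneg_left ?_ (by positivity)
  rw [abs_mul, ← sq, abs_of_nonneg (sq_nonneg _), abs_mul, abs_of_pos hp]
  exact mul_le_of_le_one_right (sq_nonneg _) (cfW_coord_le y ht i x)

lemma xfld_fderiv_abs {m : ℕ} (hm : 3 ≤ m) (y : EuclideanSpace ℝ (Fin m)) {t R : ℝ} (ht : 0 < t)
    (hR : 0 < R) (i : Fin m) (x : EuclideanSpace ℝ (Fin m)) :
    |fderiv ℝ (xfld y t R i) x (EuclideanSpace.single i 1)| ≤
      ((m : ℝ) - 2) * (R ^ 2 / t) * (1 / t + 4 / R + 2 / t) * cfW y R x ^ 2 := by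
  have hm' : (3 : ℝ) ≤ m := by exact_mod_cast hm
  have hm2 : (0 : ℝ) < (m : ℝ) - 2 := by linarith
  have hp := cfW_pos y ht x
  have hpR := cfW_pos y hR x
  rw [xfld_fderiv y ht hR, abs_mul, abs_mul, abs_neg, abs_of_pos hm2,
    abs_of_pos (by positivity : 0 < R ^ 2 / t), mul_assoc _ (1 / t + 4 / R + 2 / t)]
  refine mul_le_mul_of_nonneg_left ?_ (by positivity)
  rw [abs_mul, abs_of_nonneg (sq_nonneg _), mul_comm]
  refine mul_le_mul_of_nonneg_right ?_ (sq_nonneg _)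
  have h1 : cfW y t x ≤ 1 / t := by
    rw [le_div_iff₀ ht, mul_comm]; exact cfW_mul_le y ht x
  have a1 := cfW_coord_le y ht i x
  have a2 := cfW_coord_le y hR i x
  have h2 : cfW y R x * cfW y t x * (x i - y i) ^ 2 ≤ 1 := by
    rw [← sq_abs]
    calc _ = (cfW y R x * |x i - y i|) * (cfW y t x * |x i - y i|) := by ring
      _ ≤ 1 * 1 := mul_le_mul a2 a1 (by positivity) zero_le_one
      _ = 1 := by ring
  have h3 : cfW y t x ^ 2 * (x i - y i) ^ 2 ≤ 1 := by
    rw [← sq_abs (x i - y i), ← mul_pow]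
    exact pow_le_one₀ (by positivity) a1
  have n2 : 0 ≤ cfW y R x * cfW y t x * (x i - y i) ^ 2 := by positivity
  have n3 : 0 ≤ cfW y t x ^ 2 * (x i - y i) ^ 2 := by positivity
  have b2 := mul_le_mul_of_nonneg_left h2 (by positivity : 0 ≤ 4 / R)
  have b3 := mul_le_mul_of_nonneg_left h3 (by positivity : 0 ≤ 2 / t)
  have c2 := mul_nonneg (by positivity : 0 ≤ 4 / R) n2
  have c3 := mul_nonneg (by positivity : 0 ≤ 2 / t) n3
  have ht4 : 0 < 1 / t := by positivity
  rw [abs_le]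
  constructor
  · nlinarith
  · have : 0 < 4 / R := by positivity
    have : 0 < 2 / t := by positivity
    nlinarith

/-- the defect `∇f - f V` -/
noncomputable def defect {m : ℕ} (y : EuclideanSpace ℝ (Fin m)) (t : ℝ)
    (f : EuclideanSpace ℝ (Fin m) → ℝ) (x : EuclideanSpace ℝ (Fin m)) : ℝ :=
  ∑ i, (fderiv ℝ f x (EuclideanSpace.single i 1)
    + f x * (((m : ℝ) - 2) / t * (cfW y t x * (x i - y i)))) ^ 2

lemma defect_cont {m : ℕ} (y : EuclideanSpace ℝ (Fin m)) {t : ℝ} (ht : 0 < t)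
    {f : EuclideanSpace ℝ (Fin m) → ℝ} (hf : ContDiff ℝ 1 f) : Continuous (defect y t f) := by
  unfold defect
  have h1 := hf.continuous_fderiv one_ne_zero
  have h2 := hf.continuous
  have h3 := cfW_cont y ht
  fun_prop

lemma ibp_ineq {m : ℕ} (hm : 3 ≤ m) (y : EuclideanSpace ℝ (Fin m)) {t R : ℝ} (ht : 0 < t)
    (hR : 0 < R) {f : EuclideanSpace ℝ (Fin m) → ℝ} (hf : Admissible m f) :
    Integrable (fun x => (R * cfW y R x) ^ 2 * defect y t f x) ∧
    ∫ x, (R * cfW y R x) ^ 2 * defect y t f x ≤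
      (∫ x, ‖fderiv ℝ f x‖ ^ 2)
      - m * (m - 2) * (∫ x, (R * cfW y R x) ^ 2 * (cfW y t x ^ 2 * f x ^ 2))
      + 4 * (m - 2) * ∫ x, cfW y R x ^ 2 * f x ^ 2 := by
  obtain ⟨hf1, hfi, hfp, hfd⟩ := hf
  have hm' : (3 : ℝ) ≤ m := by exact_mod_cast hm
  have hm2 : (0 : ℝ) < (m : ℝ) - 2 := by linarith
  have hfc := hf1.continuous
  have hfdc := hf1.continuous_fderiv one_ne_zero
  have hW := cfW_sq_integrable hm y ht hfc hfi
  have hY := cfW_sq_integrable hm y hR hfc hfi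
  have hcW := cfW_cont y ht
  have hcY := cfW_cont y hR
  have hX := fun i => (xfld_contDiff y ht hR i).continuous
  have hXd := fun i => (xfld_contDiff y ht hR i).continuous_fderiv one_ne_zero
  have hθ0 : ∀ x, 0 ≤ (R * cfW y R x) ^ 2 := fun x => sq_nonneg _
  have hθ1 : ∀ x, (R * cfW y R x) ^ 2 ≤ 1 := fun x =>
    pow_le_one₀ (mul_pos hR (cfW_pos y hR x)).le (cfW_mul_le y hR x)
  have hθc : Continuous fun x => (R * cfW y R x) ^ 2 := by fun_prop
  have I1 : Integrable (fun x => (R * cfW y R x) ^ 2 * ‖fderiv ℝ f x‖ ^ 2) :=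
    hfd.bdd_mul (c := 1) hθc.aestronglyMeasurable (Eventually.of_forall fun x => by
      rw [Real.norm_eq_abs, abs_of_nonneg (hθ0 x)]; exact hθ1 x)
  have I4 : Integrable (fun x => (R * cfW y R x) ^ 2 * (cfW y t x ^ 2 * f x ^ 2)) :=
    hW.bdd_mul (c := 1) hθc.aestronglyMeasurable (Eventually.of_forall fun x => by
      rw [Real.norm_eq_abs, abs_of_nonneg (hθ0 x)]; exact hθ1 x)
  have J0 : ∀ i, Integrable (fun x => f x ^ 2 * xfld y t R i x) := by
    intro i
    refine (hY.const_mul (((m : ℝ) - 2) * (R ^ 2 / t))).mono'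
      ((hfc.pow 2).mul (hX i)).aestronglyMeasurable (Eventually.of_forall fun x => ?_)
    rw [Real.norm_eq_abs, abs_mul, abs_of_nonneg (sq_nonneg (f x))]
    have := mul_le_mul_of_nonneg_left (xfld_abs hm y ht hR i x) (sq_nonneg (f x))
    refine this.trans_eq (by ring)
  have J1 : ∀ i, Integrable (fun x =>
      f x ^ 2 * fderiv ℝ (xfld y t R i) x (EuclideanSpace.single i 1)) := by
    intro i
    refine (hY.const_mul (((m : ℝ) - 2) * (R ^ 2 / t) * (1 / t + 4 / R + 2 / t))).mono'
      ((hfc.pow 2).mul ((hXd i).clm_apply continuous_const)).aestronglyMeasurable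
      (Eventually.of_forall fun x => ?_)
    rw [Real.norm_eq_abs, abs_mul, abs_of_nonneg (sq_nonneg (f x))]
    have := mul_le_mul_of_nonneg_left (xfld_fderiv_abs hm y ht hR i x) (sq_nonneg (f x))
    refine this.trans_eq (by ring)
  have hfi2 : ∀ i x, (fderiv ℝ f x (EuclideanSpace.single i 1)) ^ 2 ≤ ‖fderiv ℝ f x‖ ^ 2 := by
    intro i x
    rw [norm_sq_coord]
    exact Finset.single_le_sum
      (f := fun i => (fderiv ℝ f x (EuclideanSpace.single i 1)) ^ 2)
      (fun i _ => sq_nonneg _) (Finset.mem_univ i)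
  have J2 : ∀ i, Integrable (fun x =>
      2 * f x * fderiv ℝ f x (EuclideanSpace.single i 1) * xfld y t R i x) := by
    intro i
    refine (hfd.add (hY.const_mul ((((m : ℝ) - 2) * (R / t)) ^ 2))).mono'
      (((continuous_const.mul hfc).mul (hfdc.clm_apply continuous_const)).mul
        (hX i)).aestronglyMeasurable (Eventually.of_forall fun x => ?_)
    have h1 := xfld_abs hm y ht hR i x
    have hyp := cfW_pos y hR x
    have h2 : |xfld y t R i x| ≤ (((m : ℝ) - 2) * (R / t)) * cfW y R x := by
      refine h1.trans ?_
      have : ((m : ℝ) - 2) * (R ^ 2 / t) * cfW y R x ^ 2 =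
        (((m : ℝ) - 2) * (R / t) * cfW y R x) * (R * cfW y R x) := by ring
      rw [this]
      exact mul_le_of_le_one_right (by positivity) (cfW_mul_le y hR x)
    have h3 : xfld y t R i x ^ 2 ≤ ((((m : ℝ) - 2) * (R / t)) * cfW y R x) ^ 2 := by
      rw [← sq_abs]; exact pow_le_pow_left₀ (abs_nonneg _) h2 2
    have h4 := mul_le_mul_of_nonneg_left h3 (sq_nonneg (f x))
    have h5 := hfi2 i x
    simp only [Pi.add_apply]
    set p := fderiv ℝ f x (EuclideanSpace.single i 1)
    rw [Real.norm_eq_abs, abs_le]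
    constructor
    · nlinarith [sq_nonneg (p + f x * xfld y t R i x)]
    · nlinarith [sq_nonneg (p - f x * xfld y t R i x)]
  have ibp : ∀ i, ∫ x, f x ^ 2 * fderiv ℝ (xfld y t R i) x (EuclideanSpace.single i 1) =
      - ∫ x, 2 * f x * fderiv ℝ f x (EuclideanSpace.single i 1) * xfld y t R i x := by
    intro i
    have hd : ∀ x, fderiv ℝ (fun x => f x ^ 2) x (EuclideanSpace.single i 1) =
        2 * f x * fderiv ℝ f x (EuclideanSpace.single i 1) := by
      intro x
      have := ((hf1.differentiable one_ne_zero x).hasFDerivAt.pow 2).fderiv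
      rw [this]
      simp
    have := integral_mul_fderiv_eq_neg_fderiv_mul_of_integrable (μ := volume)
      (f := fun x => f x ^ 2) (g := xfld y t R i) (v := EuclideanSpace.single i 1)
      (by simp only [hd]; exact J2 i) (J1 i) (J0 i)
      (fun x _ => (hf1.pow 2).differentiable one_ne_zero x)
      (fun x _ => (xfld_contDiff y ht hR i).differentiable one_ne_zero x)
    rw [this]
    simp only [hd]
  -- quadratic term
  have hV : ∀ x, ∑ i, (((m : ℝ) - 2) / t * (cfW y t x * (x i - y i))) ^ 2 =
      (((m : ℝ) - 2) / t) ^ 2 * (cfW y t x * (t - t ^ 2 * cfW y t x)) := by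
    intro x
    simp only [mul_pow, ← Finset.mul_sum]
    have := cfW_mul_den y ht x
    congr 1
    linear_combination (cfW y t x) * this
  have I3 : Integrable (fun x => (R * cfW y R x) ^ 2 * (f x ^ 2 *
      ∑ i, (((m : ℝ) - 2) / t * (cfW y t x * (x i - y i))) ^ 2)) := by
    simp only [hV]
    refine (hY.const_mul ((((m : ℝ) - 2) / t) ^ 2 * R ^ 2)).mono'
      (by fun_prop : Continuous _).aestronglyMeasurable (Eventually.of_forall fun x => ?_)
    have h1 := cfW_mul_le y ht x
    have h2 := cfW_pos y ht x
    have h3 : 0 ≤ cfW y t x * (t - t ^ 2 * cfW y t x) := by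
      have : cfW y t x * (t - t ^ 2 * cfW y t x) = (cfW y t x * t) * (1 - t * cfW y t x) := by ring
      rw [this]
      exact mul_nonneg (by positivity) (by linarith)
    have h4 : cfW y t x * (t - t ^ 2 * cfW y t x) ≤ 1 := by
      nlinarith [sq_nonneg (t * cfW y t x)]
    rw [Real.norm_eq_abs, abs_of_nonneg (by positivity)]
    have := mul_le_mul_of_nonneg_left h4
      (by positivity : 0 ≤ (R * cfW y R x) ^ 2 * (f x ^ 2 * (((m : ℝ) - 2) / t) ^ 2))
    nlinarith
  have hpt : ∀ x, (R * cfW y R x) ^ 2 * defect y t f x =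
      (R * cfW y R x) ^ 2 * ‖fderiv ℝ f x‖ ^ 2
      - (∑ i, 2 * f x * fderiv ℝ f x (EuclideanSpace.single i 1) * xfld y t R i x)
      + (R * cfW y R x) ^ 2 * (f x ^ 2 *
      ∑ i, (((m : ℝ) - 2) / t * (cfW y t x * (x i - y i))) ^ 2) := by
    intro x
    rw [norm_sq_coord]
    unfold defect
    rw [Finset.mul_sum, Finset.mul_sum, Finset.mul_sum, Finset.mul_sum,
      ← Finset.sum_sub_distrib, ← Finset.sum_add_distrib]
    refine Finset.sum_congr rfl fun i _ => ?_
    unfold xfld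
    ring
  have I2 := integrable_finsetSum (μ := volume) Finset.univ (fun i _ => J2 i)
  have I2' := integrable_finsetSum (μ := volume) Finset.univ (fun i _ => J1 i)
  have I12 : Integrable (fun x => (R * cfW y R x) ^ 2 * ‖fderiv ℝ f x‖ ^ 2
      - (∑ i, 2 * f x * fderiv ℝ f x (EuclideanSpace.single i 1) * xfld y t R i x)) := I1.sub I2
  have I12' : Integrable (fun x => (R * cfW y R x) ^ 2 * ‖fderiv ℝ f x‖ ^ 2
      + (∑ i, f x ^ 2 * fderiv ℝ (xfld y t R i) x (EuclideanSpace.single i 1))) := I1.add I2'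
  have e1 : ∫ x, (R * cfW y R x) ^ 2 * defect y t f x =
      ∫ x, (((R * cfW y R x) ^ 2 * ‖fderiv ℝ f x‖ ^ 2
      + (∑ i, f x ^ 2 * fderiv ℝ (xfld y t R i) x (EuclideanSpace.single i 1)))
      + (R * cfW y R x) ^ 2 * (f x ^ 2 *
      ∑ i, (((m : ℝ) - 2) / t * (cfW y t x * (x i - y i))) ^ 2)) := by
    simp only [hpt]
    rw [integral_add I12 I3, integral_sub I1 I2, integral_add I12' I3, integral_add I1 I2',
      integral_finsetSum _ (fun i _ => J2 i), integral_finsetSum _ (fun i _ => J1 i)]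
    simp only [ibp, Finset.sum_neg_distrib]
    ring
  have K1 : Integrable (fun x => ‖fderiv ℝ f x‖ ^ 2
      - m * (m - 2) * ((R * cfW y R x) ^ 2 * (cfW y t x ^ 2 * f x ^ 2))) :=
    hfd.sub (I4.const_mul _)
  refine ⟨?_, ?_⟩
  · simp only [hpt]
    exact I12.add I3
  · rw [e1, ← integral_const_mul, ← integral_const_mul, ← integral_sub hfd (I4.const_mul _),
      ← integral_add K1 (hY.const_mul _)]
    refine integral_mono (I12'.add I3) (K1.add (hY.const_mul _)) (fun x => ?_)
    simp only
    rw [hV]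
    simp only [xfld_fderiv y ht hR]
    set w := cfW y t x with hw
    set Y := cfW y R x with hYd
    have hs : ∑ i : Fin m, f x ^ 2 * (-((m : ℝ) - 2) * (R ^ 2 / t) * (Y ^ 2 * (w
        - 4 / R * Y * w * (x i - y i) ^ 2 - 2 / t * w ^ 2 * (x i - y i) ^ 2))) =
        f x ^ 2 * (-((m : ℝ) - 2) * (R ^ 2 / t) * (Y ^ 2 * (m * w
        - (4 / R * Y + 2 / t * w) * (t - t ^ 2 * w)))) := by
      rw [← Finset.mul_sum, ← Finset.mul_sum, ← Finset.mul_sum]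
      have e : ∀ i : Fin m, w - 4 / R * Y * w * (x i - y i) ^ 2 - 2 / t * w ^ 2 * (x i - y i) ^ 2
          = w - (4 / R * Y * w + 2 / t * w ^ 2) * (x i - y i) ^ 2 := fun i => by ring
      simp only [e]
      rw [Finset.sum_sub_distrib, ← Finset.mul_sum]
      have := cfW_mul_den y ht x
      rw [← hw] at this
      simp only [Finset.sum_const, Finset.card_univ, Fintype.card_fin, nsmul_eq_mul]
      congr 3
      linear_combination (-(4 / R * Y + 2 / t * w)) * this
    rw [hs]
    have hw0 : 0 < w := cfW_pos y ht x
    have hY0 : 0 < Y := cfW_pos y hR x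
    have hw1 : t * w ≤ 1 := cfW_mul_le y ht x
    have hY1 : R * Y ≤ 1 := cfW_mul_le y hR x
    have e3 : f x ^ 2 * (-((m : ℝ) - 2) * (R ^ 2 / t) * (Y ^ 2 * (m * w
        - (4 / R * Y + 2 / t * w) * (t - t ^ 2 * w)))) + (R * Y) ^ 2 * (f x ^ 2 *
        ((((m : ℝ) - 2) / t) ^ 2 * (w * (t - t ^ 2 * w)))) =
        - (m * (m - 2) * ((R * Y) ^ 2 * (w ^ 2 * f x ^ 2)))
        + 4 * (m - 2) * ((Y ^ 2 * f x ^ 2) * ((R * Y) * (1 - t * w))) := by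
      field_simp
      ring
    have e4 : (R * Y) * (1 - t * w) ≤ 1 := by
      have : 0 < t * w := by positivity
      have : 0 < R * Y := by positivity
      nlinarith
    have e5 : (Y ^ 2 * f x ^ 2) * ((R * Y) * (1 - t * w)) ≤ Y ^ 2 * f x ^ 2 :=
      mul_le_of_le_one_right (by positivity) e4
    have e6 := mul_le_mul_of_nonneg_left e5 (by positivity : 0 ≤ 4 * ((m : ℝ) - 2))
    have e7 : (R * Y) ^ 2 * ‖fderiv ℝ f x‖ ^ 2 ≤ ‖fderiv ℝ f x‖ ^ 2 :=
      mul_le_of_le_one_left (sq_nonneg _) (hθ1 x)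
    linarith


lemma defect_zero {m : ℕ} (hm : 3 ≤ m) (y : EuclideanSpace ℝ (Fin m)) {t : ℝ} (ht : 0 < t)
    {f : EuclideanSpace ℝ (Fin m) → ℝ} (hf : Admissible m f)
    (hA : ∫ x, ‖fderiv ℝ f x‖ ^ 2 ≤ m * (m - 2) * ∫ x, cfW y t x ^ 2 * f x ^ 2) :
    ∀ x, defect y t f x = 0 := by
  have hf' := hf
  obtain ⟨hf1, hfi, hfp, hfd⟩ := hf'
  have hfc := hf1.continuous
  have hW := cfW_sq_integrable hm y ht hfc hfi
  have hd0 : ∀ x, 0 ≤ defect y t f x := fun x => Finset.sum_nonneg fun i _ => sq_nonneg _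
  set r : ℕ → ℝ := fun k => (k : ℝ) + 1 with hr
  have hr1 : ∀ k, 1 ≤ r k := fun k => by simp [hr]
  have hr0 : ∀ k, 0 < r k := fun k => lt_of_lt_of_le one_pos (hr1 k)
  have hrt : Tendsto r atTop atTop := tendsto_atTop_add_const_right _ _ tendsto_natCast_atTop_atTop
  have hY0 : ∀ x, Tendsto (fun k => cfW y (r k) x) atTop (𝓝 0) := by
    intro x
    refine squeeze_zero (fun k => (cfW_pos y (hr0 k) x).le) (fun k => ?_) hrt.inv_tendsto_atTop
    have := cfW_mul_le y (hr0 k) x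
    simp only [Pi.inv_apply]
    rw [le_inv_comm₀ (cfW_pos y (hr0 k) x) (hr0 k), ← one_div,
      le_div_iff₀ (cfW_pos y (hr0 k) x)]
    exact this
  have L1 := cfW_sq_tendsto hm (fun _ => y) r hr0 hY0 hfc hfi
  have hθ : ∀ x, Tendsto (fun k => r k * cfW y (r k) x) atTop (𝓝 1) := by
    intro x
    have h1 : ∀ k, r k * cfW y (r k) x = 1 - ‖x - y‖ ^ 2 * ((r k)⁻¹ * cfW y (r k) x) := by
      intro k
      have := hr0 k
      have := cfW_den_pos y (hr0 k) x
      unfold cfW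
      field_simp
      ring
    simp only [h1]
    have := ((hrt.inv_tendsto_atTop.mul (hY0 x)).const_mul (‖x - y‖ ^ 2)).const_sub 1
    simpa using this
  have L2 : Tendsto (fun k => ∫ x, (r k * cfW y (r k) x) ^ 2 * (cfW y t x ^ 2 * f x ^ 2)) atTop
      (𝓝 (∫ x, cfW y t x ^ 2 * f x ^ 2)) := by
    refine tendsto_integral_of_dominated_convergence (fun x => cfW y t x ^ 2 * f x ^ 2)
      (fun k => ?_) hW (fun k => Eventually.of_forall fun x => ?_)
      (Eventually.of_forall fun x => ?_)
    · have h1 := cfW_cont y ht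
      have h2 := cfW_cont y (hr0 k)
      exact (by fun_prop : Continuous _).aestronglyMeasurable
    · rw [Real.norm_eq_abs, abs_of_nonneg (by positivity)]
      exact mul_le_of_le_one_left (by positivity)
        (pow_le_one₀ (mul_pos (hr0 k) (cfW_pos y (hr0 k) x)).le (cfW_mul_le y (hr0 k) x))
    · have := ((hθ x).pow 2).mul_const (cfW y t x ^ 2 * f x ^ 2)
      simpa using this
  have hi1 := (ibp_ineq hm y ht one_pos hf).1
  have hstep : ∀ k, ∫ x, (1 * cfW y 1 x) ^ 2 * defect y t f x ≤
      (∫ x, ‖fderiv ℝ f x‖ ^ 2)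
      - m * (m - 2) * (∫ x, (r k * cfW y (r k) x) ^ 2 * (cfW y t x ^ 2 * f x ^ 2))
      + 4 * (m - 2) * ∫ x, cfW y (r k) x ^ 2 * f x ^ 2 := by
    intro k
    obtain ⟨h1, h2⟩ := ibp_ineq hm y ht (hr0 k) hf
    refine le_trans (integral_mono hi1 h1 fun x => ?_) h2
    refine mul_le_mul_of_nonneg_right ?_ (hd0 x)
    refine pow_le_pow_left₀ (by have := cfW_pos y one_pos x; positivity) ?_ 2
    have hk := hr1 k
    have hk0 := hr0 k
    unfold cfW
    rw [← mul_div_assoc, ← mul_div_assoc, div_le_div_iff₀ (by positivity) (by positivity)]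
    nlinarith [mul_nonneg (sq_nonneg ‖x - y‖) (by nlinarith : 0 ≤ r k * r k - 1)]
  have hlim := ((L2.const_mul ((m : ℝ) * (m - 2))).const_sub
    (∫ x, ‖fderiv ℝ f x‖ ^ 2)).add (L1.const_mul (4 * ((m : ℝ) - 2)))
  have hle := ge_of_tendsto hlim (Eventually.of_forall hstep)
  have hnn : ∀ x, 0 ≤ (1 * cfW y 1 x) ^ 2 * defect y t f x :=
    fun x => mul_nonneg (sq_nonneg _) (hd0 x)
  have hz : ∫ x, (1 * cfW y 1 x) ^ 2 * defect y t f x = 0 :=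
    le_antisymm (by linarith) (integral_nonneg hnn)
  rw [integral_eq_zero_iff_of_nonneg hnn hi1] at hz
  have hc1 := cfW_cont y one_pos
  have hc2 := defect_cont y ht hf1
  have := (Continuous.ae_eq_iff_eq volume (by fun_prop) continuous_const).mp hz
  intro x
  have hx : (1 * cfW y 1 x) ^ 2 * defect y t f x = 0 := congrFun this x
  have hp := cfW_pos y one_pos x
  rcases mul_eq_zero.mp hx with h | h
  · exact absurd h (by positivity)
  · exact h

lemma defect_rigid {m : ℕ} (hm : 3 ≤ m) (y : EuclideanSpace ℝ (Fin m)) {t : ℝ} (ht : 0 < t)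
    {f : EuclideanSpace ℝ (Fin m) → ℝ} (hf : ContDiff ℝ 1 f)
    (hd : ∀ x, defect y t f x = 0) {x₀ : EuclideanSpace ℝ (Fin m)} (h0 : f x₀ = 0) :
    ∀ x, f x = 0 := by
  obtain ⟨p, hp⟩ : ∃ p : ℕ, m = p + 3 := ⟨m - 3, by omega⟩
  have hpr : (m : ℝ) - 2 = (p : ℝ) + 1 := by rw [hp]; push_cast; ring
  have hfi : ∀ x i, fderiv ℝ f x (EuclideanSpace.single i 1) =
      - (f x * (((m : ℝ) - 2) / t * (cfW y t x * (x i - y i)))) := by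
    intro x i
    have h1 := hd x
    unfold defect at h1
    rw [Finset.sum_eq_zero_iff_of_nonneg fun i _ => sq_nonneg _] at h1
    have h2 := h1 i (Finset.mem_univ i)
    have h3 := pow_eq_zero_iff two_ne_zero |>.mp h2
    linarith
  have hN : ∀ x, HasFDerivAt (fun x : EuclideanSpace ℝ (Fin m) => t ^ 2 + ‖x - y‖ ^ 2)
      ((2 : ℝ) • innerSL ℝ (x - y)) x := by
    intro x
    have := (((hasFDerivAt_id x).sub_const y).norm_sq).const_add (t ^ 2)
    refine this.congr_fderiv ?_
    ext v
    simp
  set g : EuclideanSpace ℝ (Fin m) → ℝ :=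
    fun x => f x ^ 2 * (t ^ 2 + ‖x - y‖ ^ 2) ^ (p + 1) with hg
  have hgd : ∀ x, HasFDerivAt g (0 : EuclideanSpace ℝ (Fin m) →L[ℝ] ℝ) x := by
    intro x
    have hfx := (hf.differentiable one_ne_zero x).hasFDerivAt
    have h := (hfx.pow 2).fun_mul ((hN x).pow (p + 1))
    refine h.congr_fderiv ?_
    have : ‖(f x ^ 2) • ((p + 1) • (t ^ 2 + ‖x - y‖ ^ 2) ^ (p + 1 - 1)) •
        ((2 : ℝ) • innerSL ℝ (x - y)) + (t ^ 2 + ‖x - y‖ ^ 2) ^ (p + 1) •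
        (2 • f x ^ (2 - 1)) • fderiv ℝ f x‖ ^ 2 = 0 := by
      rw [norm_sq_coord]
      refine Finset.sum_eq_zero fun i _ => ?_
      rw [pow_eq_zero_iff two_ne_zero]
      have hNx := cfW_den_pos y ht x
      simp only [add_apply, smul_apply, smul_eq_mul, hfi, innerSL_apply_apply,
        EuclideanSpace.inner_single_right, hpr, cfW]
      simp only [nsmul_eq_mul, add_tsub_cancel_right, PiLp.sub_apply]
      push_cast
      rw [pow_succ (t ^ 2 + ‖x - y‖ ^ 2) p]
      simp
      field_simp
      ring
    exact norm_eq_zero.mp (pow_eq_zero_iff two_ne_zero |>.mp this)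
  intro x
  have hc := is_const_of_fderiv_eq_zero (𝕜 := ℝ) (f := g)
    (fun x => (hgd x).differentiableAt) (fun x => (hgd x).fderiv) x x₀
  simp only [hg, h0] at hc
  have hNx := cfW_den_pos y ht x
  rw [zero_pow two_ne_zero, zero_mul] at hc
  rcases mul_eq_zero.mp hc with h | h
  · exact pow_eq_zero_iff two_ne_zero |>.mp h
  · exact absurd h (by positivity)

/-- if `0 ≤ b̃(x) ≤ C(1+|x|²)⁻²` and `b̃ ≢ 0`, then the infimum `S_{b̃}`
is not attained: every admissible `f` satisfies `Q_{b̃}(f) > S_{b̃}`. -/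
theorem weighted_sobolev_inf_not_attained (m : ℕ) (hm : 3 ≤ m)
    (b : EuclideanSpace ℝ (Fin m) → ℝ) (hb_cont : Continuous b)
    (C : ℝ) (hC : 0 < C)
    (hb_nonneg : ∀ x, 0 ≤ b x)
    (hb_bound : ∀ x, b x ≤ C / (1 + ‖x‖ ^ 2) ^ 2)
    (hb_ne : ∃ x₀, 0 < b x₀) :
    ∀ f, Admissible m f → sobolevInf m b < sobolevQuot m b f := by
  intro f hf
  by_contra! hle
  have hmin : ∀ g, Admissible m g → sobolevQuot m b f ≤ sobolevQuot m b g := by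
    intro g hg
    refine hle.trans (csInf_le ⟨0, ?_⟩ ⟨g, hg, rfl⟩)
    rintro _ ⟨u, hu, rfl⟩
    unfold sobolevQuot
    refine div_nonneg (integral_nonneg fun x => ?_) (Real.rpow_nonneg hu.2.2.1.le _)
    exact add_nonneg (sq_nonneg _) (mul_nonneg (hb_nonneg x) (sq_nonneg _))
  have hbf := bf_sq_zero hm hb_cont hC hb_nonneg hb_bound hf hmin
  obtain ⟨x₀, hx₀⟩ := hb_ne
  have h0 : f x₀ = 0 := by
    rcases mul_eq_zero.mp (hbf x₀) with h | h
    · exact absurd h hx₀.ne'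
    · exact pow_eq_zero_iff two_ne_zero |>.mp h
  obtain ⟨y, t, ht, hA⟩ := conf_ineq hm hf hmin hbf
  have hz := defect_rigid hm y ht hf.1 (defect_zero hm y ht hf hA) h0
  have hp := hf.2.2.1
  have hm' : (3 : ℝ) ≤ m := by exact_mod_cast hm
  have hq : (2 * (m : ℝ)) / ((m : ℝ) - 2) ≠ 0 :=
    (div_pos (by linarith) (by linarith)).ne'
  unfold critInt at hp
  simp [hz, Real.zero_rpow hq] at hp
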